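/- For every K > 0 there is a constant C = C(K) with the following property. Let (u,P,d) be a smooth solution of the nematic liquid crystal system on ℝ²×(0,T) satisfying the Schwartz decay assumption, and suppose that ‖u(t,·)‖_{L²} ≤ K and ‖∇d(t,·)‖_{L²} ≤ K for all t ∈ (0,T). Write ω = ∂_1 u_2 − ∂_2 u_1. Then for every t ∈ (0,T), (d/dt)( ‖Δu(t,·)‖_{L²}² + ‖∇Δd(t,·)‖_{L²}² ) + ½( ‖∇Δu(t,·)‖_{L²}² + ‖Δ²d(t,·)‖_{L²}² ) ≤ C( 1 + ‖ω(t,·)‖_{L²}^{12} + ‖Δd(t,·)‖_{L²}^{12} ). -/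

import Mathlib

open MeasureTheory Real

noncomputable section

/-- `pd i f x` is the `i`-th partial derivative `∂ᵢ f (x)` of `f : ℝⁿ → ℝ`. -/
def pd {n : ℕ} (i : Fin n) (f : EuclideanSpace ℝ (Fin n) → ℝ)
    (x : EuclideanSpace ℝ (Fin n)) : ℝ :=
  fderiv ℝ f x (EuclideanSpace.single i 1)

/-- `lap f x` is the Laplacian `Δf(x) = Σᵢ ∂ᵢ∂ᵢ f (x)`. -/
def lap {n : ℕ} (f : EuclideanSpace ℝ (Fin n) → ℝ)
    (x : EuclideanSpace ℝ (Fin n)) : ℝ :=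
  ∑ i, pd i (fun y => pd i f y) x
/-- The simplified Ericksen–Leslie nematic liquid crystal system on ℝⁿ × (0,T). -/
structure IsNLC (n : ℕ) (T : ℝ)
    (u : ℝ → EuclideanSpace ℝ (Fin n) → EuclideanSpace ℝ (Fin n))
    (P : ℝ → EuclideanSpace ℝ (Fin n) → ℝ)
    (d : ℝ → EuclideanSpace ℝ (Fin n) → EuclideanSpace ℝ (Fin 3)) : Prop where
  smooth_u : ContDiff ℝ (⊤ : ℕ∞) (Function.uncurry u)
  smooth_P : ContDiff ℝ (⊤ : ℕ∞) (Function.uncurry P)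
  smooth_d : ContDiff ℝ (⊤ : ℕ∞) (Function.uncurry d)
  unit : ∀ t ∈ Set.Ioo (0:ℝ) T, ∀ x, ‖d t x‖ = 1
  momentum : ∀ t ∈ Set.Ioo (0:ℝ) T, ∀ x, ∀ j : Fin n,
    deriv (fun s => u s x j) t - lap (fun y => u t y j) x
      + (∑ i, u t x i * pd i (fun y => u t y j) x) + pd j (P t) x
      = - ∑ i, pd i (fun y => ∑ k : Fin 3,
          pd i (fun z => d t z k) y * pd j (fun z => d t z k) y) x
  director : ∀ t ∈ Set.Ioo (0:ℝ) T, ∀ x, ∀ k : Fin 3,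
    deriv (fun s => d s x k) t + ∑ i, u t x i * pd i (fun y => d t y k) x
      = lap (fun y => d t y k) x
        + (∑ i, ∑ k' : Fin 3, (pd i (fun y => d t y k') x) ^ 2) * d t x k
  divfree : ∀ t ∈ Set.Ioo (0:ℝ) T, ∀ x, ∑ i, pd i (fun y => u t y i) x = 0

/-- A family of functions, Schwartz in x with seminorms locally uniformly bounded in t ∈ (0,T). -/
def SchwartzFamily {n : ℕ} (T : ℝ) (f : ℝ → EuclideanSpace ℝ (Fin n) → ℝ) : Prop :=
  ∀ t₀ ∈ Set.Ioo (0:ℝ) T, ∀ k l : ℕ, ∃ ε > 0, ∃ C : ℝ,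
    ∀ t ∈ Set.Ioo (0:ℝ) T, |t - t₀| < ε →
      ∀ x, ‖x‖ ^ k * ‖iteratedFDeriv ℝ l (f t) x‖ ≤ C

/-- Schwartz decay assumption: u, ∂ₜu, ∇d, ∂ₜ∇d are Schwartz in x, locally uniformly in t. -/
def SchwartzDecay (n : ℕ) (T : ℝ)
    (u : ℝ → EuclideanSpace ℝ (Fin n) → EuclideanSpace ℝ (Fin n))
    (d : ℝ → EuclideanSpace ℝ (Fin n) → EuclideanSpace ℝ (Fin 3)) : Prop :=
  (∀ j : Fin n, SchwartzFamily T fun t x => u t x j) ∧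
  (∀ j : Fin n, SchwartzFamily T fun t x => deriv (fun s => u s x j) t) ∧
  (∀ (i : Fin n) (k : Fin 3), SchwartzFamily T fun t x => pd i (fun y => d t y k) x) ∧
  (∀ (i : Fin n) (k : Fin 3),
    SchwartzFamily T fun t x => deriv (fun s => pd i (fun y => d s y k) x) t)

/-- ‖Δd‖_{L²} for d : ℝⁿ → ℝ³. -/
def lapL2 {n : ℕ} (d : EuclideanSpace ℝ (Fin n) → EuclideanSpace ℝ (Fin 3)) : ℝ :=
  Real.sqrt (∑ k : Fin 3, ∫ x, (lap (fun z => d z k) x) ^ 2)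

/-- ‖∇d‖_{L²} for d : ℝⁿ → ℝ³. -/
def gradL2 {n : ℕ} (d : EuclideanSpace ℝ (Fin n) → EuclideanSpace ℝ (Fin 3)) : ℝ :=
  Real.sqrt (∑ i, ∑ k : Fin 3, ∫ x, (pd i (fun z => d z k) x) ^ 2)

/-- ‖∇Δd‖_{L²} for d : ℝⁿ → ℝ³. -/
def gradLapL2 {n : ℕ} (d : EuclideanSpace ℝ (Fin n) → EuclideanSpace ℝ (Fin 3)) : ℝ :=
  Real.sqrt (∑ i, ∑ k : Fin 3, ∫ x, (pd i (lap (fun z => d z k)) x) ^ 2)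

/-- ‖Δ²d‖_{L²} for d : ℝⁿ → ℝ³. -/
def bilapL2 {n : ℕ} (d : EuclideanSpace ℝ (Fin n) → EuclideanSpace ℝ (Fin 3)) : ℝ :=
  Real.sqrt (∑ k : Fin 3, ∫ x, (lap (lap (fun z => d z k)) x) ^ 2)

/-- ‖u‖_{L²} for a vector field u : ℝⁿ → ℝⁿ. -/
def L2u {n : ℕ} (u : EuclideanSpace ℝ (Fin n) → EuclideanSpace ℝ (Fin n)) : ℝ :=
  Real.sqrt (∑ i, ∫ x, (u x i) ^ 2)

/-- ‖Δu‖_{L²} for a vector field u : ℝⁿ → ℝⁿ. -/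
def lapL2u {n : ℕ} (u : EuclideanSpace ℝ (Fin n) → EuclideanSpace ℝ (Fin n)) : ℝ :=
  Real.sqrt (∑ i, ∫ x, (lap (fun y => u y i) x) ^ 2)

/-- ‖∇Δu‖_{L²} for a vector field u : ℝⁿ → ℝⁿ. -/
def gradLapL2u {n : ℕ} (u : EuclideanSpace ℝ (Fin n) → EuclideanSpace ℝ (Fin n)) : ℝ :=
  Real.sqrt (∑ i, ∑ j, ∫ x, (pd i (lap (fun y => u y j)) x) ^ 2)

/-- The scalar vorticity ω = ∂₁u₂ − ∂₂u₁ in 2D. -/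
def vort2 (u : EuclideanSpace ℝ (Fin 2) → EuclideanSpace ℝ (Fin 2))
    (x : EuclideanSpace ℝ (Fin 2)) : ℝ :=
  pd 0 (fun y => u y 1) x - pd 1 (fun y => u y 0) x

/-- ‖ω‖_{L²} for the 2D scalar vorticity. -/
def vort2L2 (u : EuclideanSpace ℝ (Fin 2) → EuclideanSpace ℝ (Fin 2)) : ℝ :=
  Real.sqrt (∫ x, (vort2 u x) ^ 2)

/-!
Write `φ = (u, ∇d)`. The energy `‖Δφ‖²` dissipates at rate `‖∇Δu‖² + ‖Δ²d‖²`, which is `‖∇³φ‖²` up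
to integrations by parts, and the pressure drops out because `Δu` is divergence free. Once one
derivative is moved from each nonlinear term onto the dissipative factor, what remains of it is
bounded pointwise by `|φ||∇²φ| + |∇φ|²`. For the cubic term `|∇d|²d` this rests on `|d| = 1`, which
gives `|∇d|² = -d·Δd` and hence `|∇d|² ≤ |Δd|`.

In the plane, Ladyzhenskaya's inequality and the interpolation `‖∇²φ‖² ≤ ‖∇φ‖‖∇³φ‖` bound the
square integral of this majorant by `‖φ‖‖∇φ‖^(3/2)‖∇³φ‖^(3/2)` and `‖∇φ‖³‖∇³φ‖`. Young's inequality
absorbs `‖∇³φ‖` into the dissipation at the cost of `‖∇φ‖⁶`, and `‖∇φ‖² = ‖ω‖² + ‖Δd‖²` by the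
div–curl identity.
-/

open scoped ContDiff

/-- `IsSchwartz f` says that the function `f` underlies a Schwartz function; it lets the Schwartz
class be used as a property of plain functions such as the components of `u` and `∇d`. -/
def IsSchwartz {E : Type*} [NormedAddCommGroup E] [NormedSpace ℝ E] (f : E → ℝ) : Prop :=
  ∃ g : SchwartzMap E ℝ, ⇑g = f

namespace IsSchwartz

section NormedSpace

variable {E : Type*} [NormedAddCommGroup E] [NormedSpace ℝ E] {f g : E → ℝ}

theorem contDiff (hf : IsSchwartz f) : ContDiff ℝ ∞ f := by
  obtain ⟨g, rfl⟩ := hf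
  exact g.smooth _

theorem differentiable (hf : IsSchwartz f) : Differentiable ℝ f :=
  hf.contDiff.differentiable (by simp)

theorem continuous (hf : IsSchwartz f) : Continuous f := hf.contDiff.continuous

theorem add (hf : IsSchwartz f) (hg : IsSchwartz g) : IsSchwartz fun x => f x + g x := by
  obtain ⟨f, rfl⟩ := hf
  obtain ⟨g, rfl⟩ := hg
  exact ⟨f + g, rfl⟩

theorem sub (hf : IsSchwartz f) (hg : IsSchwartz g) : IsSchwartz fun x => f x - g x := by
  obtain ⟨f, rfl⟩ := hf
  obtain ⟨g, rfl⟩ := hg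
  exact ⟨f - g, rfl⟩

theorem mul (hf : IsSchwartz f) (hg : IsSchwartz g) : IsSchwartz fun x => f x * g x := by
  obtain ⟨f, rfl⟩ := hf
  obtain ⟨g, rfl⟩ := hg
  exact ⟨SchwartzMap.pairing (ContinuousLinearMap.mul ℝ ℝ) f g, by ext; simp⟩

theorem sq (hf : IsSchwartz f) : IsSchwartz fun x => f x ^ 2 := by
  simpa only [pow_two] using hf.mul hf

theorem sum {ι : Type*} (s : Finset ι) {f : ι → E → ℝ} (hf : ∀ i, IsSchwartz (f i)) :
    IsSchwartz fun x => ∑ i ∈ s, f i x := by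
  choose g hg using hf
  exact ⟨∑ i ∈ s, g i, by ext; simp [← hg]⟩

end NormedSpace

variable {n : ℕ} {f : EuclideanSpace ℝ (Fin n) → ℝ}

theorem integrable (hf : IsSchwartz f) : Integrable f := by
  obtain ⟨g, rfl⟩ := hf
  exact g.integrable

theorem pd (hf : IsSchwartz f) (i : Fin n) : IsSchwartz (pd i f) := by
  obtain ⟨g, rfl⟩ := hf
  exact ⟨LineDeriv.lineDerivOp (EuclideanSpace.single i (1 : ℝ)) g,
    funext fun x => SchwartzMap.lineDerivOp_apply_eq_fderiv ..⟩

theorem lap (hf : IsSchwartz f) : IsSchwartz (lap f) :=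
  .sum Finset.univ fun i => (hf.pd i).pd i

end IsSchwartz

section PartialDerivatives

theorem fderiv_fderiv_apply_comm {E : Type*} [NormedAddCommGroup E] [NormedSpace ℝ E] {f : E → ℝ}
    (hf : ContDiff ℝ ∞ f) (x v w : E) :
    fderiv ℝ (fun y => fderiv ℝ f y v) x w = fderiv ℝ (fun y => fderiv ℝ f y w) x v := by
  have hf' : DifferentiableAt ℝ (fderiv ℝ f) x :=
    (hf.fderiv_right (m := ∞) (by simp)).differentiable (by simp) x
  simp only [fderiv_clm_apply hf' (differentiableAt_const _), fderiv_fun_const, Pi.zero_apply,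
    ContinuousLinearMap.comp_zero, zero_add, ContinuousLinearMap.flip_apply]
  exact (hf.contDiffAt.isSymmSndFDerivAt
    (by simpa using WithTop.coe_le_coe.2 (le_top : (2 : ℕ∞) ≤ ⊤))) _ _

variable {n : ℕ} {f g : EuclideanSpace ℝ (Fin n) → ℝ} {x : EuclideanSpace ℝ (Fin n)}

theorem pd_add (hf : DifferentiableAt ℝ f x) (hg : DifferentiableAt ℝ g x) (i : Fin n) :
    pd i (fun y => f y + g y) x = pd i f x + pd i g x := by
  simp [pd, fderiv_fun_add hf hg]

theorem pd_sub (hf : DifferentiableAt ℝ f x) (hg : DifferentiableAt ℝ g x) (i : Fin n) :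
    pd i (fun y => f y - g y) x = pd i f x - pd i g x := by
  simp [pd, fderiv_fun_sub hf hg]

theorem pd_mul (hf : DifferentiableAt ℝ f x) (hg : DifferentiableAt ℝ g x) (i : Fin n) :
    pd i (fun y => f y * g y) x = pd i f x * g x + f x * pd i g x := by
  simp only [pd, fderiv_fun_mul hf hg, add_apply, smul_apply, smul_eq_mul]
  ring

theorem pd_sum {ι : Type*} (s : Finset ι) {f : ι → EuclideanSpace ℝ (Fin n) → ℝ}
    (hf : ∀ a ∈ s, DifferentiableAt ℝ (f a) x) (i : Fin n) :
    pd i (fun y => ∑ a ∈ s, f a y) x = ∑ a ∈ s, pd i (f a) x := by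
  simp [pd, fderiv_fun_sum hf]

theorem contDiff_pd (hf : ContDiff ℝ ∞ f) (i : Fin n) : ContDiff ℝ ∞ (pd i f) :=
  (hf.fderiv_right (m := ∞) (by simp)).clm_apply contDiff_const

theorem differentiable_pd (hf : ContDiff ℝ ∞ f) (i : Fin n) : Differentiable ℝ (pd i f) :=
  (contDiff_pd hf i).differentiable (by simp)

theorem contDiff_lap (hf : ContDiff ℝ ∞ f) : ContDiff ℝ ∞ (lap f) :=
  ContDiff.sum fun i _ => contDiff_pd (contDiff_pd hf i) i

theorem pd_comm (hf : ContDiff ℝ ∞ f) (i j : Fin n) : pd i (pd j f) = pd j (pd i f) :=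
  funext fun _ => fderiv_fderiv_apply_comm hf ..

theorem pd_lap (hf : ContDiff ℝ ∞ f) (i : Fin n) : pd i (lap f) = lap (pd i f) := by
  ext x
  calc pd i (lap f) x = ∑ j, pd i (pd j (pd j f)) x :=
        pd_sum _ (fun j _ => differentiable_pd (contDiff_pd hf j) j x) i
    _ = ∑ j, pd j (pd j (pd i f)) x := by
        simp_rw [pd_comm (contDiff_pd hf _) i, pd_comm hf i]

end PartialDerivatives

/-- The pointwise squared Euclidean length `∑ₐ φₐ(x)²` of a finite family of functions. -/
def sumSq {ι E : Type*} [Fintype ι] (φ : ι → E → ℝ) (x : E) : ℝ := ∑ a, φ a x ^ 2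

/-- The family of all first partial derivatives of a family of functions, indexed so that it can
be iterated: `grad (grad φ)` is the family of second derivatives. -/
def grad {ι : Type*} {n : ℕ} (φ : ι → EuclideanSpace ℝ (Fin n) → ℝ) :
    ι × Fin n → EuclideanSpace ℝ (Fin n) → ℝ :=
  fun p => pd p.2 (φ p.1)

section Families

variable {ι : Type*} {n : ℕ} {φ : ι → EuclideanSpace ℝ (Fin n) → ℝ}

theorem contDiff_grad (hφ : ∀ a, ContDiff ℝ ∞ (φ a)) (p : ι × Fin n) : ContDiff ℝ ∞ (grad φ p) :=
  contDiff_pd (hφ p.1) p.2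

theorem lap_comp_grad (hφ : ∀ a, ContDiff ℝ ∞ (φ a)) : lap ∘ grad φ = grad (lap ∘ φ) :=
  funext fun p => (pd_lap (hφ p.1) p.2).symm

theorem IsSchwartz.grad (hφ : ∀ a, IsSchwartz (φ a)) (p : ι × Fin n) : IsSchwartz (grad φ p) :=
  (hφ p.1).pd p.2

variable [Fintype ι]

theorem sumSq_nonneg {E : Type*} (φ : ι → E → ℝ) (x : E) : 0 ≤ sumSq φ x :=
  Finset.sum_nonneg fun _ _ => sq_nonneg _

theorem sq_le_sumSq {E : Type*} (φ : ι → E → ℝ) (a : ι) (x : E) : φ a x ^ 2 ≤ sumSq φ x :=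
  Finset.single_le_sum (fun b _ => sq_nonneg (φ b x)) (Finset.mem_univ a)

theorem sumSq_grad (φ : ι → EuclideanSpace ℝ (Fin n) → ℝ) (x : EuclideanSpace ℝ (Fin n)) :
    sumSq (grad φ) x = ∑ a, ∑ i, pd i (φ a) x ^ 2 :=
  Fintype.sum_prod_type _

theorem IsSchwartz.sumSq {E : Type*} [NormedAddCommGroup E] [NormedSpace ℝ E] {φ : ι → E → ℝ}
    (hφ : ∀ a, IsSchwartz (φ a)) : IsSchwartz (sumSq φ) :=
  .sum Finset.univ fun a => (hφ a).sq

theorem integral_sumSq (hφ : ∀ a, IsSchwartz (φ a)) :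
    ∫ x, sumSq φ x = ∑ a, ∫ x, φ a x ^ 2 :=
  integral_finsetSum _ fun a _ => (hφ a).sq.integrable

end Families

theorem sq_integral_mul_le {α : Type*} [MeasurableSpace α] {μ : Measure α} {f g : α → ℝ}
    (hf : MemLp f 2 μ) (hg : MemLp g 2 μ) :
    (∫ x, f x * g x ∂μ) ^ 2 ≤ (∫ x, f x ^ 2 ∂μ) * ∫ x, g x ^ 2 ∂μ := by
  have inner_toLp {f g : α → ℝ} (hf : MemLp f 2 μ) (hg : MemLp g 2 μ) :
      inner ℝ (hf.toLp f) (hg.toLp g) = ∫ x, f x * g x ∂μ := by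
    rw [L2.inner_def]
    refine integral_congr_ae ?_
    filter_upwards [hf.coeFn_toLp, hg.coeFn_toLp] with x hfx hgx
    simp [hfx, hgx, mul_comm]
  simpa only [inner_toLp, pow_two] using real_inner_mul_inner_self_le (hf.toLp f) (hg.toLp g)

section IntegrationByParts

variable {n : ℕ} {f g : EuclideanSpace ℝ (Fin n) → ℝ}

theorem IsSchwartz.memLp_two (hf : IsSchwartz f) : MemLp f 2 := by
  obtain ⟨g, rfl⟩ := hf
  exact g.memLp 2

theorem integral_mul_pd (hf : IsSchwartz f) (hg : IsSchwartz g) (i : Fin n) :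
    ∫ x, f x * pd i g x = -∫ x, pd i f x * g x :=
  integral_mul_fderiv_eq_neg_fderiv_mul_of_integrable ((hf.pd i).mul hg).integrable
    (hf.mul (hg.pd i)).integrable (hf.mul hg).integrable (fun x _ => hf.differentiable x)
    fun x _ => hg.differentiable x

theorem integral_pd_mul_pd_comm (hf : IsSchwartz f) (hg : IsSchwartz g) (i j : Fin n) :
    ∫ x, pd i f x * pd j g x = ∫ x, pd j f x * pd i g x := by
  rw [integral_mul_pd (hf.pd i) hg, pd_comm hf.contDiff, ← integral_mul_pd (hf.pd j) hg]

theorem sum_integral_pd_mul_pd (hf : IsSchwartz f) (hg : IsSchwartz g) :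
    ∑ i, ∫ x, pd i f x * pd i g x = -∫ x, f x * lap g x := by
  have mul_lap x : f x * lap g x = ∑ i, f x * pd i (pd i g) x := Finset.mul_sum ..
  simp_rw [mul_lap, integral_finsetSum _ fun i _ => (hf.mul ((hg.pd i).pd i)).integrable,
    integral_mul_pd hf (hg.pd _), Finset.sum_neg_distrib, neg_neg]

theorem sum_integral_sq_pd_eq_div_add_curl {D : Fin n → EuclideanSpace ℝ (Fin n) → ℝ}
    (hD : ∀ j, IsSchwartz (D j)) :
    ∑ j, ∑ i, ∫ x, pd i (D j) x ^ 2 = (∫ x, (∑ j, pd j (D j) x) ^ 2) +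
      2⁻¹ * ∑ j, ∑ i, ∫ x, (pd i (D j) x - pd j (D i) x) ^ 2 := by
  have hpd i j : IsSchwartz (pd i (D j)) := (hD j).pd i
  have sq_div : ∫ x, (∑ j, pd j (D j) x) ^ 2 = ∑ j, ∑ i, ∫ x, pd i (D j) x * pd j (D i) x := by
    simp_rw [pow_two, Finset.sum_mul_sum, integral_finsetSum _ fun j _ =>
      (IsSchwartz.sum Finset.univ fun i => (hpd j j).mul (hpd i i)).integrable,
      integral_finsetSum _ fun i _ => ((hpd _ _).mul (hpd i i)).integrable,
      integral_pd_mul_pd_comm (hD _) (hD _)]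
  have sq_curl i j : ∫ x, (pd i (D j) x - pd j (D i) x) ^ 2 =
      (∫ x, pd i (D j) x ^ 2) + (∫ x, pd j (D i) x ^ 2) -
        2 * ∫ x, pd i (D j) x * pd j (D i) x := by
    simp_rw [sub_sq', mul_assoc]
    rw [integral_sub ((hpd i j).sq.add (hpd j i).sq).integrable
      (((hpd i j).mul (hpd j i)).integrable.const_mul 2),
      integral_add (hpd i j).sq.integrable (hpd j i).sq.integrable, integral_const_mul]
  simp_rw [sq_div, sq_curl, Finset.sum_sub_distrib, Finset.sum_add_distrib, ← Finset.mul_sum]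
  rw [Finset.sum_comm (f := fun j i => ∫ x, pd j (D i) x ^ 2)]
  ring

variable {ι : Type*} {φ : ι → EuclideanSpace ℝ (Fin n) → ℝ}

theorem isSchwartz_lap_of_grad (hφ : ∀ p, IsSchwartz (grad φ p)) (a : ι) :
    IsSchwartz (lap (φ a)) :=
  .sum Finset.univ fun i => (hφ (a, i)).pd i

variable [Fintype ι]

theorem integral_sumSq_grad_grad (hφ : ∀ a, ContDiff ℝ ∞ (φ a))
    (hgrad : ∀ p, IsSchwartz (grad φ p)) :
    ∫ x, sumSq (grad (grad φ)) x = ∫ x, sumSq (lap ∘ φ) x := by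
  have hessian a : ∑ j, ∑ i, ∫ x, pd i (pd j (φ a)) x ^ 2 = ∫ x, lap (φ a) x ^ 2 := by
    have curl_free i j : pd i (pd j (φ a)) = pd j (pd i (φ a)) := pd_comm (hφ a) i j
    have := sum_integral_sq_pd_eq_div_add_curl fun j => hgrad (a, j)
    simpa [lap, grad, curl_free] using this
  rw [integral_sumSq (IsSchwartz.grad hgrad), Fintype.sum_prod_type, Fintype.sum_prod_type,
    integral_sumSq (φ := lap ∘ φ) (isSchwartz_lap_of_grad hgrad)]
  exact Finset.sum_congr rfl fun a _ => hessian a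

theorem sq_integral_sumSq_grad_le (hφ : ∀ a, IsSchwartz (φ a)) :
    (∫ x, sumSq (grad φ) x) ^ 2 ≤ (∫ x, sumSq φ x) * ∫ x, sumSq (grad (grad φ)) x := by
  have interpolation a :
      (∑ i, ∫ x, pd i (φ a) x ^ 2) ^ 2 ≤ (∫ x, φ a x ^ 2) * ∫ x, lap (φ a) x ^ 2 := by
    simp_rw [pow_two (pd _ _ _), sum_integral_pd_mul_pd (hφ a) (hφ a), neg_sq]
    exact sq_integral_mul_le (hφ a).memLp_two (hφ a).lap.memLp_two
  have nonneg (f : EuclideanSpace ℝ (Fin n) → ℝ) : 0 ≤ ∫ x, f x ^ 2 :=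
    integral_nonneg fun x => sq_nonneg (f x)
  rw [integral_sumSq_grad_grad (fun a => (hφ a).contDiff) (IsSchwartz.grad hφ), integral_sumSq hφ,
    integral_sumSq (IsSchwartz.grad hφ), integral_sumSq (φ := lap ∘ φ) fun a => (hφ a).lap,
    Fintype.sum_prod_type]
  exact Finset.sum_sq_le_sum_mul_sum_of_sq_le_mul _ (fun a _ => nonneg _) (fun a _ => nonneg _)
    fun a _ => interpolation a

theorem integral_sumSq_grad_eq_integral_sq_vort2
    {u : EuclideanSpace ℝ (Fin 2) → EuclideanSpace ℝ (Fin 2)}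
    (hu : ∀ j, IsSchwartz fun x => u x j) (hdiv : ∀ x, ∑ j, pd j (fun y => u y j) x = 0) :
    ∫ x, sumSq (grad fun j x => u x j) x = ∫ x, vort2 u x ^ 2 := by
  rw [integral_sumSq (IsSchwartz.grad hu), Fintype.sum_prod_type]
  refine (sum_integral_sq_pd_eq_div_add_curl hu).trans ?_
  simp only [hdiv, Fin.sum_univ_two, sub_sq_comm (pd 1 _ _), vort2]
  simp
  ring

end IntegrationByParts

section Sobolev

open Filter Topology

theorem enorm_fderiv_smul_le {E F : Type*} [NormedAddCommGroup E] [NormedSpace ℝ E]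
    [NormedAddCommGroup F] [NormedSpace ℝ F] {c : E → ℝ} {f : E → F} {x : E}
    (hc : DifferentiableAt ℝ c x) (hf : DifferentiableAt ℝ f x) :
    ‖fderiv ℝ (fun y => c y • f y) x‖ₑ ≤
      ‖c x‖ₑ * ‖fderiv ℝ f x‖ₑ + ‖fderiv ℝ c x‖ₑ * ‖f x‖ₑ := by
  rw [fderiv_fun_smul hc hf]
  refine (enorm_add_le (E := E →L[ℝ] F) _ _).trans (add_le_add (enorm_smul _ _).le ?_)
  rw [← ofReal_norm, ContinuousLinearMap.norm_smulRight_apply,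
    ENNReal.ofReal_mul (norm_nonneg _), ofReal_norm, ofReal_norm]

theorem enorm_fderiv_norm_sq_le {E F : Type*} [NormedAddCommGroup E] [NormedSpace ℝ E]
    [NormedAddCommGroup F] [InnerProductSpace ℝ F] {f : E → F} {x : E}
    (hf : DifferentiableAt ℝ f x) :
    ‖fderiv ℝ (fun y => ‖f y‖ ^ 2) x‖ₑ ≤ 2 * (‖f x‖ₑ * ‖fderiv ℝ f x‖ₑ) := by
  rw [hf.hasFDerivAt.norm_sq.fderiv, ← ofReal_norm, ← ofReal_norm, ← ofReal_norm,
    ← ENNReal.ofReal_mul (norm_nonneg _), ← ENNReal.ofReal_ofNat,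
    ← ENNReal.ofReal_mul zero_le_two, ← innerSL_apply_norm ℝ (f x)]
  refine ENNReal.ofReal_le_ofReal ((norm_nsmul_le).trans ?_)
  gcongr
  · simp
  · exact ContinuousLinearMap.opNorm_comp_le _ _

theorem exists_cutoff_seq (E : Type*) [NormedAddCommGroup E] [NormedSpace ℝ E]
    [FiniteDimensional ℝ E] : ∃ (χ : ℕ → E → ℝ) (M : NNReal),
      (∀ k, ContDiff ℝ 1 (χ k)) ∧ (∀ k, HasCompactSupport (χ k)) ∧ (∀ k x, ‖χ k x‖ₑ ≤ 1) ∧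
      (∀ k x, ‖fderiv ℝ (χ k) x‖ₑ ≤ M * (k + 1 : ENNReal)⁻¹) ∧
      ∀ x, ∀ᶠ k in atTop, χ k x = 1 := by
  let b : ContDiffBump (0 : E) := ⟨1, 2, by norm_num, by norm_num⟩
  have hb : ContDiff ℝ 1 b := b.contDiff
  obtain ⟨M, hM⟩ := (b.hasCompactSupport.fderiv ℝ).exists_bound_of_continuous
    (hb.continuous_fderiv (by simp))
  refine ⟨fun k x => b ((k + 1 : ℝ)⁻¹ • x), M.toNNReal, fun k => hb.comp (contDiff_const_smul _),
    fun k => b.hasCompactSupport.comp_smul (by positivity), fun k x => ?_, fun k x => ?_,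
    fun x => ?_⟩
  · rw [Real.enorm_of_nonneg b.nonneg]
    exact ENNReal.ofReal_le_one.2 b.le_one
  · rw [fderiv_comp_smul, enorm_smul, mul_comm]
    gcongr
    · rw [← ofReal_norm]
      exact ENNReal.ofReal_le_ofReal (hM _)
    · rw [Real.enorm_of_nonneg (by positivity), ENNReal.ofReal_inv_of_pos (by positivity)]
      norm_cast
  · filter_upwards [eventually_ge_atTop ⌈‖x‖⌉₊] with k hk
    have hxk : ‖x‖ ≤ k + 1 := (Nat.ceil_le.1 hk).trans (by simp)
    refine b.one_of_mem_closedBall ?_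
    rw [mem_closedBall_zero_iff, norm_smul, Real.norm_of_nonneg (by positivity)]
    exact inv_mul_le_one_of_le₀ hxk (by positivity)

variable {E : Type*} [NormedAddCommGroup E] [NormedSpace ℝ E] [FiniteDimensional ℝ E]
  [MeasurableSpace E] [BorelSpace E] (μ : Measure E) [μ.IsAddHaarMeasure]
  {F : Type*} [NormedAddCommGroup F]

theorem lintegral_pow_le_pow_lintegral_fderiv_of_integrable [NormedSpace ℝ F] {u : E → F}
    (hu : ContDiff ℝ 1 u) (hint : Integrable u μ) {p : ℝ}
    (hp : Real.HolderConjugate (Module.finrank ℝ E) p) :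
    ∫⁻ x, ‖u x‖ₑ ^ p ∂μ ≤
      lintegralPowLePowLIntegralFDerivConst μ p * (∫⁻ x, ‖fderiv ℝ u x‖ₑ ∂μ) ^ p := by
  obtain ⟨χ, M, hχ, hsupp, hle, hfderiv, heventually⟩ := exists_cutoff_seq E
  have cutoff_fderiv k x : ‖fderiv ℝ (fun y => χ k y • u y) x‖ₑ ≤
      ‖fderiv ℝ u x‖ₑ + M * (k + 1 : ENNReal)⁻¹ * ‖u x‖ₑ := by
    refine (enorm_fderiv_smul_le ((hχ k).differentiable (by simp) x)
      (hu.differentiable (by simp) x)).trans ?_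
    gcongr
    · exact mul_le_of_le_one_left' (hle k x)
    · exact hfderiv k x
  have cutoff k : ∫⁻ x, ‖χ k x • u x‖ₑ ^ p ∂μ ≤ lintegralPowLePowLIntegralFDerivConst μ p *
      (∫⁻ x, ‖fderiv ℝ u x‖ₑ ∂μ + M * (k + 1 : ENNReal)⁻¹ * ∫⁻ x, ‖u x‖ₑ ∂μ) ^ p := by
    refine (lintegral_pow_le_pow_lintegral_fderiv μ ((hχ k).smul hu) (hsupp k).smul_right
      hp).trans ?_
    rw [← lintegral_const_mul' _ _ (by finiteness), ← lintegral_add_left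
      (hu.continuous_fderiv (by simp)).enorm.measurable]
    have := hp.symm.nonneg
    gcongr
    exact cutoff_fderiv _ _
  have tendsto_rhs : Tendsto (fun k : ℕ => lintegralPowLePowLIntegralFDerivConst μ p *
      (∫⁻ x, ‖fderiv ℝ u x‖ₑ ∂μ + M * (k + 1 : ENNReal)⁻¹ * ∫⁻ x, ‖u x‖ₑ ∂μ) ^ p) atTop
      (𝓝 (lintegralPowLePowLIntegralFDerivConst μ p * (∫⁻ x, ‖fderiv ℝ u x‖ₑ ∂μ) ^ p)) := by
    have : Tendsto (fun k : ℕ => (k + 1 : ENNReal)⁻¹) atTop (𝓝 0) := by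
      exact_mod_cast ENNReal.tendsto_inv_nat_nhds_zero.comp (tendsto_add_atTop_nat 1)
    have := (ENNReal.Tendsto.mul_const (ENNReal.Tendsto.const_mul (a := M) this
      (.inr ENNReal.coe_ne_top)) (.inr hint.2.ne)).const_add (∫⁻ x, ‖fderiv ℝ u x‖ₑ ∂μ)
    simpa using ENNReal.Tendsto.const_mul (this.ennrpow_const p) (.inr ENNReal.coe_ne_top)
  calc ∫⁻ x, ‖u x‖ₑ ^ p ∂μ = ∫⁻ x, liminf (fun k => ‖χ k x • u x‖ₑ ^ p) atTop ∂μ := by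
        refine lintegral_congr fun x => (Tendsto.liminf_eq ?_).symm
        refine tendsto_const_nhds.congr' ?_
        filter_upwards [heventually x] with k hk
        rw [hk, one_smul]
    _ ≤ liminf (fun k => ∫⁻ x, ‖χ k x • u x‖ₑ ^ p ∂μ) atTop :=
        lintegral_liminf_le fun k =>
          ((hχ k).continuous.smul hu.continuous).enorm.measurable.pow_const p
    _ ≤ _ := (liminf_le_liminf (.of_forall cutoff)).trans_eq tendsto_rhs.liminf_eq

/-- Ladyzhenskaya's inequality: the Sobolev embedding of `W^{1,1}` in `L²`, applied to `‖f‖²`. -/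
theorem lintegral_pow_four_le [InnerProductSpace ℝ F] (hE : Module.finrank ℝ E = 2) {f : E → F}
    (hf : ContDiff ℝ 1 f) (hmem : MemLp f 2 μ) :
    ∫⁻ x, ‖f x‖ₑ ^ 4 ∂μ ≤ 4 * lintegralPowLePowLIntegralFDerivConst μ 2 *
      ((∫⁻ x, ‖f x‖ₑ ^ 2 ∂μ) * ∫⁻ x, ‖fderiv ℝ f x‖ₑ ^ 2 ∂μ) := by
  have hp : Real.HolderConjugate (Module.finrank ℝ E) 2 := by
    rw [hE]
    exact_mod_cast Real.HolderConjugate.two_two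
  have cauchySchwarz : (∫⁻ x, ‖f x‖ₑ * ‖fderiv ℝ f x‖ₑ ∂μ) ^ 2 ≤
      (∫⁻ x, ‖f x‖ₑ ^ 2 ∂μ) * ∫⁻ x, ‖fderiv ℝ f x‖ₑ ^ 2 ∂μ := by
    have := pow_le_pow_left₀ zero_le (ENNReal.lintegral_mul_le_Lp_mul_Lq μ .two_two
      hf.continuous.enorm.measurable.aemeasurable
      (hf.continuous_fderiv (by simp)).enorm.measurable.aemeasurable) 2
    simpa [mul_pow, ← ENNReal.rpow_mul_natCast] using this
  calc ∫⁻ x, ‖f x‖ₑ ^ 4 ∂μ = ∫⁻ x, ‖‖f x‖ ^ 2‖ₑ ^ (2 : ℝ) ∂μ := by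
        simp_rw [enorm_pow, enorm_norm, ENNReal.rpow_two, ← pow_mul]
    _ ≤ lintegralPowLePowLIntegralFDerivConst μ 2 *
          (∫⁻ x, ‖fderiv ℝ (fun y => ‖f y‖ ^ 2) x‖ₑ ∂μ) ^ (2 : ℝ) :=
        lintegral_pow_le_pow_lintegral_fderiv_of_integrable μ (hf.norm_sq ℝ)
          (hmem.integrable_norm_pow two_ne_zero) hp
    _ ≤ lintegralPowLePowLIntegralFDerivConst μ 2 *
          (2 * ∫⁻ x, ‖f x‖ₑ * ‖fderiv ℝ f x‖ₑ ∂μ) ^ (2 : ℝ) := by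
        rw [← lintegral_const_mul' _ _ (by finiteness)]
        gcongr
        exact enorm_fderiv_norm_sq_le (hf.differentiable (by simp) _)
    _ = 4 * lintegralPowLePowLIntegralFDerivConst μ 2 *
          (∫⁻ x, ‖f x‖ₑ * ‖fderiv ℝ f x‖ₑ ∂μ) ^ 2 := by
        rw [ENNReal.rpow_two]
        ring
    _ ≤ _ := by gcongr

end Sobolev

section Ladyzhenskaya

variable {ι : Type*} [Fintype ι]

theorem fderiv_apply_eq_sum_pd {n : ℕ} (f : EuclideanSpace ℝ (Fin n) → ℝ)
    (x v : EuclideanSpace ℝ (Fin n)) : fderiv ℝ f x v = ∑ i, v i * pd i f x := by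
  conv_lhs => rw [← (EuclideanSpace.basisFun (Fin n) ℝ).sum_repr v]
  simp [pd]

theorem enorm_sq_eq_ofReal {F : Type*} [NormedAddCommGroup F] (v : F) :
    ‖v‖ₑ ^ 2 = ENNReal.ofReal (‖v‖ ^ 2) := by
  rw [← ofReal_norm, ENNReal.ofReal_pow (norm_nonneg _)]

theorem integral_sumSq_nonneg {n : ℕ} (φ : ι → EuclideanSpace ℝ (Fin n) → ℝ) :
    0 ≤ ∫ x, sumSq φ x :=
  integral_nonneg (sumSq_nonneg φ)

theorem norm_toLp_sq {E : Type*} (φ : ι → E → ℝ) (x : E) :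
    ‖WithLp.toLp 2 fun a => φ a x‖ ^ 2 = sumSq φ x := by
  simp [EuclideanSpace.norm_sq_eq, sumSq]

theorem norm_fderiv_toLp_sq_le {n : ℕ} {φ : ι → EuclideanSpace ℝ (Fin n) → ℝ}
    {x : EuclideanSpace ℝ (Fin n)} (hφ : ∀ a, DifferentiableAt ℝ (φ a) x) :
    ‖fderiv ℝ (fun y => WithLp.toLp 2 fun a => φ a y) x‖ ^ 2 ≤ sumSq (grad φ) x := by
  let f y := WithLp.toLp 2 fun a => φ a y
  have apply_coord v a : fderiv ℝ f x v a = ∑ i, v i * pd i (φ a) x := by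
    have hf : DifferentiableAt ℝ f x := differentiableAt_euclidean.2 hφ
    have := ((EuclideanSpace.proj (𝕜 := ℝ) a).hasFDerivAt.comp x hf.hasFDerivAt).fderiv
    rw [← fderiv_apply_eq_sum_pd]
    exact (DFunLike.congr_fun this v).symm
  have norm_apply_sq_le v : ‖fderiv ℝ f x v‖ ^ 2 ≤ sumSq (grad φ) x * ‖v‖ ^ 2 := by
    simp_rw [EuclideanSpace.norm_sq_eq, apply_coord, sumSq_grad, Real.norm_eq_abs, sq_abs,
      Finset.sum_mul]
    refine Finset.sum_le_sum fun a _ => ?_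
    rw [← Finset.sum_mul, mul_comm]
    exact Finset.sum_mul_sq_le_sq_mul_sq ..
  rw [← Real.le_sqrt (norm_nonneg _) (sumSq_nonneg _ _)]
  refine ContinuousLinearMap.opNorm_le_bound _ (Real.sqrt_nonneg _) fun v => ?_
  have := Real.sqrt_le_sqrt (norm_apply_sq_le v)
  rwa [Real.sqrt_mul (sumSq_nonneg _ _), Real.sqrt_sq (norm_nonneg _),
    Real.sqrt_sq (norm_nonneg _)] at this

/-- The constant in Ladyzhenskaya's inequality on the plane. -/
def ladyzhenskayaConst : ℝ :=
  4 * lintegralPowLePowLIntegralFDerivConst (volume : Measure (EuclideanSpace ℝ (Fin 2))) 2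

theorem ladyzhenskayaConst_nonneg : 0 ≤ ladyzhenskayaConst := by
  unfold ladyzhenskayaConst
  positivity

theorem ofReal_ladyzhenskayaConst : ENNReal.ofReal ladyzhenskayaConst = 4 *
    lintegralPowLePowLIntegralFDerivConst (volume : Measure (EuclideanSpace ℝ (Fin 2))) 2 := by
  rw [ladyzhenskayaConst, ENNReal.ofReal_mul zero_le_four]
  simp

theorem integral_sq_sumSq_le {φ : ι → EuclideanSpace ℝ (Fin 2) → ℝ}
    (hφ : ∀ a, IsSchwartz (φ a)) :
    ∫ x, sumSq φ x ^ 2 ≤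
      ladyzhenskayaConst * ((∫ x, sumSq φ x) * ∫ x, sumSq (grad φ) x) := by
  let f y := WithLp.toLp 2 fun a => φ a y
  have hf : ContDiff ℝ 1 f :=
    contDiff_euclidean.2 fun a => (hφ a).contDiff.of_le (by simp)
  have hmem : MemLp f 2 := by
    rw [memLp_two_iff_integrable_sq_norm hf.continuous.aestronglyMeasurable]
    simpa only [f, norm_toLp_sq] using (IsSchwartz.sumSq hφ).integrable
  have normSq : ∫⁻ x, ‖f x‖ₑ ^ 2 = .ofReal (∫ x, sumSq φ x) := by
    rw [ofReal_integral_eq_lintegral_ofReal (IsSchwartz.sumSq hφ).integrable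
      (.of_forall (sumSq_nonneg φ))]
    simp_rw [enorm_sq_eq_ofReal, f, norm_toLp_sq]
  have norm_pow_four : ∫⁻ x, ‖f x‖ₑ ^ 4 = .ofReal (∫ x, sumSq φ x ^ 2) := by
    rw [ofReal_integral_eq_lintegral_ofReal (IsSchwartz.sumSq hφ).sq.integrable
      (.of_forall fun x => sq_nonneg _)]
    simp_rw [pow_mul _ 2 2, enorm_sq_eq_ofReal, f, norm_toLp_sq,
      ENNReal.ofReal_pow (sumSq_nonneg φ _)]
  have normSq_fderiv : ∫⁻ x, ‖fderiv ℝ f x‖ₑ ^ 2 ≤ .ofReal (∫ x, sumSq (grad φ) x) := by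
    rw [ofReal_integral_eq_lintegral_ofReal (IsSchwartz.sumSq (IsSchwartz.grad hφ)).integrable
      (.of_forall (sumSq_nonneg _))]
    refine lintegral_mono fun x => ?_
    rw [enorm_sq_eq_ofReal]
    exact ENNReal.ofReal_le_ofReal (norm_fderiv_toLp_sq_le fun a => (hφ a).differentiable x)
  rw [← ENNReal.ofReal_le_ofReal_iff (mul_nonneg ladyzhenskayaConst_nonneg
    (mul_nonneg (integral_sumSq_nonneg _) (integral_sumSq_nonneg _))),
    ENNReal.ofReal_mul ladyzhenskayaConst_nonneg, ENNReal.ofReal_mul (integral_sumSq_nonneg _),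
    ← norm_pow_four, ← normSq, ofReal_ladyzhenskayaConst]
  exact (lintegral_pow_four_le volume finrank_euclideanSpace_fin hf hmem).trans (by gcongr)

end Ladyzhenskaya

section Interpolation

theorem le_add_of_pow_succ_le {a b c ε t : ℝ} (ha : 0 ≤ a) (hb : 0 ≤ b) (hc : 0 ≤ c) (hε : 0 < ε)
    {k : ℕ} (h : t ^ (k + 1) ≤ c * a * b ^ k) : t ≤ ε * b + c / ε ^ k * a := by
  have hx : 0 ≤ ε * b := by positivity
  have hy : 0 ≤ c / ε ^ k * a := by positivity
  have product_le : c * a * b ^ k ≤ (ε * b + c / ε ^ k * a) ^ (k + 1) :=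
    calc c * a * b ^ k = (ε * b) ^ k * (c / ε ^ k * a) := by rw [mul_pow]; field_simp
      _ ≤ (ε * b + c / ε ^ k * a) ^ k * (ε * b + c / ε ^ k * a) := by gcongr <;> linarith
      _ = _ := (pow_succ ..).symm
  by_contra! hlt
  exact (pow_lt_pow_left₀ hlt (add_nonneg hx hy) k.succ_ne_zero).not_ge (h.trans product_le)

variable {ι : Type*} [Fintype ι]

/-- A pointwise bound, up to constants, for every term of second order that is quadratic in `φ`:
it stands for `|φ||∇²φ| + |∇φ|²`. -/
def majorant {n : ℕ} (φ : ι → EuclideanSpace ℝ (Fin n) → ℝ) (x : EuclideanSpace ℝ (Fin n)) : ℝ :=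
  √(sumSq φ x * sumSq (grad (grad φ)) x) + sumSq (grad φ) x

theorem majorant_sq_le {n : ℕ} (φ : ι → EuclideanSpace ℝ (Fin n) → ℝ)
    (x : EuclideanSpace ℝ (Fin n)) :
    majorant φ x ^ 2 ≤
      2 * (sumSq φ x * sumSq (grad (grad φ)) x + sumSq (grad φ) x ^ 2) := by
  refine add_sq_le.trans_eq ?_
  rw [Real.sq_sqrt (mul_nonneg (sumSq_nonneg _ _) (sumSq_nonneg _ _))]

variable {φ : ι → EuclideanSpace ℝ (Fin 2) → ℝ}

theorem sq_integral_sq_sumSq_grad_le (hφ : ∀ a, IsSchwartz (φ a)) :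
    (∫ x, sumSq (grad φ) x ^ 2) ^ 2 ≤ ladyzhenskayaConst ^ 2 *
      (∫ x, sumSq (grad φ) x) ^ 3 * ∫ x, sumSq (grad (grad (grad φ))) x := by
  have hgrad := IsSchwartz.grad hφ
  have lady := integral_sq_sumSq_le hgrad
  have interp := sq_integral_sumSq_grad_le hgrad
  set E₁ := ∫ x, sumSq (grad φ) x
  set E₂ := ∫ x, sumSq (grad (grad φ)) x
  set E₃ := ∫ x, sumSq (grad (grad (grad φ))) x
  calc (∫ x, sumSq (grad φ) x ^ 2) ^ 2 ≤ (ladyzhenskayaConst * (E₁ * E₂)) ^ 2 :=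
        pow_le_pow_left₀ (integral_nonneg fun x => sq_nonneg _) lady 2
    _ = ladyzhenskayaConst ^ 2 * E₁ ^ 2 * E₂ ^ 2 := by ring
    _ ≤ ladyzhenskayaConst ^ 2 * E₁ ^ 2 * (E₁ * E₃) := by gcongr
    _ = ladyzhenskayaConst ^ 2 * E₁ ^ 3 * E₃ := by ring

theorem integral_sumSq_mul_sumSq_grad_grad_pow_four_le (hφ : ∀ a, IsSchwartz (φ a)) {κ : ℝ}
    (hκ : ∫ x, sumSq φ x ≤ κ) :
    (∫ x, sumSq φ x * sumSq (grad (grad φ)) x) ^ 4 ≤ (ladyzhenskayaConst ^ 2 * κ) ^ 2 *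
      (∫ x, sumSq (grad φ) x) ^ 3 * (∫ x, sumSq (grad (grad (grad φ))) x) ^ 3 := by
  have hgrad := IsSchwartz.grad hφ
  have hgrad₂ := IsSchwartz.grad hgrad
  have cauchySchwarz := sq_integral_mul_le (IsSchwartz.sumSq hφ).memLp_two
    (IsSchwartz.sumSq hgrad₂).memLp_two
  have lady₀ := integral_sq_sumSq_le hφ
  have lady₂ := integral_sq_sumSq_le hgrad₂
  have interp := sq_integral_sumSq_grad_le hgrad
  have hL := ladyzhenskayaConst_nonneg
  have hE₀ : 0 ≤ ∫ x, sumSq φ x := integral_sumSq_nonneg φ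
  have hE₁ : 0 ≤ ∫ x, sumSq (grad φ) x := integral_sumSq_nonneg _
  have hE₂ : 0 ≤ ∫ x, sumSq (grad (grad φ)) x := integral_sumSq_nonneg _
  have hE₃ : 0 ≤ ∫ x, sumSq (grad (grad (grad φ))) x := integral_sumSq_nonneg _
  set E₀ := ∫ x, sumSq φ x
  set E₁ := ∫ x, sumSq (grad φ) x
  set E₂ := ∫ x, sumSq (grad (grad φ)) x
  set E₃ := ∫ x, sumSq (grad (grad (grad φ))) x
  calc (∫ x, sumSq φ x * sumSq (grad (grad φ)) x) ^ 4
      = ((∫ x, sumSq φ x * sumSq (grad (grad φ)) x) ^ 2) ^ 2 := by ring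
    _ ≤ ((∫ x, sumSq φ x ^ 2) * ∫ x, sumSq (grad (grad φ)) x ^ 2) ^ 2 := by gcongr
    _ ≤ (ladyzhenskayaConst * (E₀ * E₁) * (ladyzhenskayaConst * (E₂ * E₃))) ^ 2 := by
        gcongr
    _ = (ladyzhenskayaConst ^ 2 * E₀) ^ 2 * E₁ ^ 2 * E₃ ^ 2 * E₂ ^ 2 := by ring
    _ ≤ (ladyzhenskayaConst ^ 2 * κ) ^ 2 * E₁ ^ 2 * E₃ ^ 2 * (E₁ * E₃) := by gcongr
    _ = (ladyzhenskayaConst ^ 2 * κ) ^ 2 * E₁ ^ 3 * E₃ ^ 3 := by ring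

theorem exists_integral_sq_le_of_abs_le_majorant (ι : Type*) [Fintype ι] (c κ : ℝ) {ε : ℝ}
    (hε : 0 < ε) :
    ∃ C : ℝ, 0 ≤ C ∧ ∀ (φ : ι → EuclideanSpace ℝ (Fin 2) → ℝ) (f : EuclideanSpace ℝ (Fin 2) → ℝ),
      (∀ a, IsSchwartz (φ a)) → ∫ x, sumSq φ x ≤ κ → IsSchwartz f →
      (∀ x, |f x| ≤ c * majorant φ x) →
      ∫ x, f x ^ 2 ≤ ε * (∫ x, sumSq (grad (grad (grad φ))) x) +
        C * (∫ x, sumSq (grad φ) x) ^ 3 := by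
  set δ := ε / (4 * (c ^ 2 + 1)) with hδ_def
  have hδ : 0 < δ := by positivity
  refine ⟨2 * c ^ 2 * ((ladyzhenskayaConst ^ 2 * κ) ^ 2 / δ ^ 3 + ladyzhenskayaConst ^ 2 / δ ^ 1),
    by positivity, fun φ f hφ hκ hf hle => ?_⟩
  have hgrad := IsSchwartz.grad hφ
  have sq_le x : f x ^ 2 ≤
      2 * c ^ 2 * (sumSq φ x * sumSq (grad (grad φ)) x + sumSq (grad φ) x ^ 2) :=
    calc f x ^ 2 ≤ (c * majorant φ x) ^ 2 :=
          sq_le_sq' (neg_le_of_abs_le (hle x)) (le_of_abs_le (hle x))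
      _ = c ^ 2 * majorant φ x ^ 2 := mul_pow ..
      _ ≤ _ := by nlinarith [majorant_sq_le φ x, sq_nonneg c]
  have hprod := (IsSchwartz.sumSq hφ).mul (IsSchwartz.sumSq (IsSchwartz.grad hgrad))
  have hsq := (IsSchwartz.sumSq hgrad).sq
  have hE₁ : 0 ≤ (∫ x, sumSq (grad φ) x) ^ 3 := pow_nonneg (integral_sumSq_nonneg _) 3
  have hE₃ : 0 ≤ ∫ x, sumSq (grad (grad (grad φ))) x := integral_sumSq_nonneg _
  have le_prod := le_add_of_pow_succ_le hE₁ hE₃ (sq_nonneg _) hδ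
    (integral_sumSq_mul_sumSq_grad_grad_pow_four_le hφ hκ)
  have le_sq := le_add_of_pow_succ_le hE₁ hE₃ (sq_nonneg _) hδ
    (k := 1) (by simpa only [pow_one] using sq_integral_sq_sumSq_grad_le hφ)
  have integral_le := integral_mono hf.sq.integrable
    ((hprod.add hsq).integrable.const_mul (2 * c ^ 2)) sq_le
  rw [integral_const_mul, integral_add hprod.integrable hsq.integrable] at integral_le
  have ε_le : 4 * c ^ 2 * δ ≤ ε := by
    rw [hδ_def, mul_div_assoc', div_le_iff₀ (by positivity)]
    nlinarith
  nlinarith [mul_le_mul_of_nonneg_right ε_le hE₃,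
    mul_le_mul_of_nonneg_left (add_le_add le_prod le_sq) (by positivity : 0 ≤ 2 * c ^ 2)]

end Interpolation

section PointwiseBounds

theorem abs_sum_le_card_mul {ι : Type*} [Fintype ι] {f : ι → ℝ} {B : ℝ} (hf : ∀ i, |f i| ≤ B) :
    |∑ i, f i| ≤ Fintype.card ι * B := by
  calc |∑ i, f i| ≤ ∑ i, |f i| := Finset.abs_sum_le_sum_abs ..
    _ ≤ ∑ _i : ι, B := Finset.sum_le_sum fun i _ => hf i
    _ = Fintype.card ι * B := by simp

variable {n : ℕ} {f g : EuclideanSpace ℝ (Fin n) → ℝ}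

theorem pd_mul_eq (hf : ContDiff ℝ ∞ f) (hg : ContDiff ℝ ∞ g) (i : Fin n) :
    pd i (fun y => f y * g y) = fun y => pd i f y * g y + f y * pd i g y :=
  funext fun x => pd_mul (hf.differentiable (by simp) x) (hg.differentiable (by simp) x) i

theorem pd_pd_mul (hf : ContDiff ℝ ∞ f) (hg : ContDiff ℝ ∞ g) (i j : Fin n)
    (x : EuclideanSpace ℝ (Fin n)) :
    pd i (pd j fun y => f y * g y) x =
      pd i (pd j f) x * g x + pd j f x * pd i g x +
        (pd i f x * pd j g x + f x * pd i (pd j g) x) := by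
  rw [pd_mul_eq hf hg, pd_add, pd_mul_eq (contDiff_pd hf j) hg, pd_mul_eq hf (contDiff_pd hg j)]
  · exact (((contDiff_pd hf j).mul hg).differentiable (by simp)) x
  · exact ((hf.mul (contDiff_pd hg j)).differentiable (by simp)) x

theorem lap_mul (hf : ContDiff ℝ ∞ f) (hg : ContDiff ℝ ∞ g) (x : EuclideanSpace ℝ (Fin n)) :
    lap (fun y => f y * g y) x = lap f x * g x + 2 * ∑ i, pd i f x * pd i g x + f x * lap g x := by
  simp only [lap, Finset.sum_mul, Finset.mul_sum, ← Finset.sum_add_distrib]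
  refine Finset.sum_congr rfl fun i _ => (pd_pd_mul hf hg i i x).trans ?_
  ring

theorem lap_sub (hf : ContDiff ℝ ∞ f) (hg : ContDiff ℝ ∞ g) (x : EuclideanSpace ℝ (Fin n)) :
    lap (fun y => f y - g y) x = lap f x - lap g x := by
  have pd_sub_eq i : pd i (fun y => f y - g y) = fun y => pd i f y - pd i g y :=
    funext fun y => pd_sub (hf.differentiable (by simp) y) (hg.differentiable (by simp) y) i
  simp only [lap, pd_sub_eq, pd_sub (differentiable_pd hf _ x) (differentiable_pd hg _ x)]
  exact Finset.sum_sub_distrib ..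

theorem lap_sum {ι : Type*} (s : Finset ι) {f : ι → EuclideanSpace ℝ (Fin n) → ℝ}
    (hf : ∀ a, ContDiff ℝ ∞ (f a)) (x : EuclideanSpace ℝ (Fin n)) :
    lap (fun y => ∑ a ∈ s, f a y) x = ∑ a ∈ s, lap (f a) x := by
  have pd_sum_eq i : pd i (fun y => ∑ a ∈ s, f a y) = fun y => ∑ a ∈ s, pd i (f a) y :=
    funext fun y => pd_sum s (fun a _ => (hf a).differentiable (by simp) y) i
  simp only [lap, pd_sum_eq, pd_sum s fun a _ => differentiable_pd (hf a) _ x]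
  exact Finset.sum_comm

variable {ι : Type*} [Fintype ι] {φ : ι → EuclideanSpace ℝ (Fin n) → ℝ}

theorem abs_mul_le_sqrt_sumSq_mul_sumSq {κ E : Type*} [Fintype κ] (φ : ι → E → ℝ) (ψ : κ → E → ℝ)
    (a : ι) (b : κ) (x : E) : |φ a x * ψ b x| ≤ √(sumSq φ x * sumSq ψ x) := by
  refine Real.abs_le_sqrt ?_
  rw [mul_pow]
  exact mul_le_mul (sq_le_sumSq φ a x) (sq_le_sumSq ψ b x) (sq_nonneg _) (sumSq_nonneg φ x)

theorem abs_mul_grad_grad_add_grad_mul_grad_le (φ : ι → EuclideanSpace ℝ (Fin n) → ℝ) (a b c e : ι)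
    (i j k l : Fin n) (x : EuclideanSpace ℝ (Fin n)) :
    |φ a x * pd i (pd j (φ b)) x + pd k (φ c) x * pd l (φ e) x| ≤ majorant φ x := by
  refine (abs_add_le _ _).trans (add_le_add ?_ ?_)
  · exact abs_mul_le_sqrt_sumSq_mul_sumSq φ (grad (grad φ)) a ((b, j), i) x
  · refine (abs_mul_le_sqrt_sumSq_mul_sumSq (grad φ) (grad φ) (c, k) (e, l) x).trans_eq ?_
    exact Real.sqrt_mul_self (sumSq_nonneg _ x)

theorem sumSq_comp_le {κ E : Type*} [Fintype κ] {e : κ → ι} (he : e.Injective) (φ : ι → E → ℝ)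
    (x : E) : sumSq (φ ∘ e) x ≤ sumSq φ x := by
  have := Finset.sum_map Finset.univ ⟨e, he⟩ fun a => φ a x ^ 2
  exact this.symm.trans_le (Finset.sum_le_univ_sum_of_nonneg fun a => sq_nonneg (φ a x))

theorem majorant_comp_le {κ : Type*} [Fintype κ] {e : κ → ι} (he : e.Injective)
    (φ : ι → EuclideanSpace ℝ (Fin n) → ℝ) (x : EuclideanSpace ℝ (Fin n)) :
    majorant (φ ∘ e) x ≤ majorant φ x := by
  have he₁ : (Prod.map e (id : Fin n → Fin n)).Injective := he.prodMap Function.injective_id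
  have le₀ := sumSq_comp_le he φ x
  have le₁ := sumSq_comp_le he₁ (grad φ) x
  have le₂ := sumSq_comp_le (he₁.prodMap Function.injective_id) (grad (grad φ)) x
  exact add_le_add (Real.sqrt_le_sqrt (mul_le_mul le₀ le₂ (sumSq_nonneg _ x) (sumSq_nonneg _ x)))
    le₁

theorem abs_pd_mul_pd_le_majorant (hφ : ∀ a, ContDiff ℝ ∞ (φ a)) (a b : ι) (i j : Fin n)
    (x : EuclideanSpace ℝ (Fin n)) :
    |pd i (fun y => φ a y * pd j (φ b) y) x| ≤ majorant φ x := by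
  rw [congrFun (pd_mul_eq (hφ a) (contDiff_pd (hφ b) j) i) x, add_comm]
  exact abs_mul_grad_grad_add_grad_mul_grad_le ..

theorem abs_pd_pd_mul_le_majorant (hφ : ∀ a, ContDiff ℝ ∞ (φ a)) (a b : ι) (i j : Fin n)
    (x : EuclideanSpace ℝ (Fin n)) :
    |pd i (pd j fun y => φ a y * φ b y) x| ≤ 2 * majorant φ x := by
  rw [pd_pd_mul (hφ a) (hφ b), two_mul, mul_comm (pd i (pd j (φ a)) x), add_comm (pd i (φ a) x * _)]
  exact (abs_add_le _ _).trans (add_le_add (abs_mul_grad_grad_add_grad_mul_grad_le ..)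
    (abs_mul_grad_grad_add_grad_mul_grad_le ..))

theorem abs_lap_mul_le_majorant (hφ : ∀ a, ContDiff ℝ ∞ (φ a)) (a b : ι)
    (x : EuclideanSpace ℝ (Fin n)) :
    |lap (fun y => φ a y * φ b y) x| ≤ n * (2 * majorant φ x) := by
  simpa [lap] using abs_sum_le_card_mul fun i => abs_pd_pd_mul_le_majorant hφ a b i i x

theorem contDiff_sumSq (hφ : ∀ a, ContDiff ℝ ∞ (φ a)) : ContDiff ℝ ∞ (sumSq φ) :=
  ContDiff.sum fun a _ => (hφ a).pow 2

theorem sq_pd_sumSq_le (hφ : ∀ a, ContDiff ℝ ∞ (φ a)) (i : Fin n) (x : EuclideanSpace ℝ (Fin n)) :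
    pd i (sumSq φ) x ^ 2 ≤ 4 * (sumSq φ x * sumSq (grad φ) x) := by
  have pd_sq a : pd i (fun y => φ a y ^ 2) x = 2 * (φ a x * pd i (φ a) x) := by
    simp only [pow_two, pd_mul_eq (hφ a) (hφ a)]
    ring
  have pd_sumSq : pd i (sumSq φ) x = 2 * ∑ a, φ a x * pd i (φ a) x := by
    rw [Finset.mul_sum]
    refine (pd_sum _ (fun a _ => ((hφ a).pow 2).differentiable (by simp) x) i).trans ?_
    exact Finset.sum_congr rfl fun a _ => pd_sq a
  calc pd i (sumSq φ) x ^ 2 = 4 * (∑ a, φ a x * pd i (φ a) x) ^ 2 := by rw [pd_sumSq]; ring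
    _ ≤ 4 * (sumSq φ x * ∑ a, pd i (φ a) x ^ 2) := by
        gcongr
        exact Finset.sum_mul_sq_le_sq_mul_sq ..
    _ ≤ 4 * (sumSq φ x * sumSq (grad φ) x) := by
        rw [sumSq_grad]
        gcongr with a
        · exact sumSq_nonneg φ x
        · exact Finset.single_le_sum (f := fun i => pd i (φ a) x ^ 2) (fun _ _ => sq_nonneg _)
            (Finset.mem_univ i)

theorem lap_sumSq (hφ : ∀ a, ContDiff ℝ ∞ (φ a)) (x : EuclideanSpace ℝ (Fin n)) :
    lap (sumSq φ) x = 2 * ∑ a, φ a x * lap (φ a) x + 2 * sumSq (grad φ) x := by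
  refine (lap_sum _ (fun a => (hφ a).pow 2) x).trans ?_
  simp only [pow_two, lap_mul (hφ _) (hφ _), sumSq_grad, Finset.mul_sum, ← Finset.sum_add_distrib]
  refine Finset.sum_congr rfl fun a _ => ?_
  ring

theorem abs_lap_sumSq_le_majorant (hφ : ∀ a, ContDiff ℝ ∞ (φ a)) (x : EuclideanSpace ℝ (Fin n)) :
    |lap (sumSq φ) x| ≤ Fintype.card ι * (n * (2 * majorant φ x)) := by
  refine (congrArg abs (lap_sum _ (fun a => (hφ a).pow 2) x)).trans_le ?_
  simp only [pow_two]
  exact abs_sum_le_card_mul fun a => abs_lap_mul_le_majorant hφ a a x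

theorem sumSq_lap_le (φ : ι → EuclideanSpace ℝ (Fin n) → ℝ) (x : EuclideanSpace ℝ (Fin n)) :
    sumSq (lap ∘ φ) x ≤ n * sumSq (grad (grad φ)) x := by
  have sq_lap_le a : lap (φ a) x ^ 2 ≤ n * ∑ i, pd i (pd i (φ a)) x ^ 2 := by
    simpa [lap] using sq_sum_le_card_mul_sum_sq (s := Finset.univ)
      (f := fun i => pd i (pd i (φ a)) x)
  rw [sumSq_grad, Fintype.sum_prod_type, Finset.mul_sum]
  refine Finset.sum_le_sum fun a _ => (sq_lap_le a).trans ?_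
  gcongr with i
  exact Finset.single_le_sum (f := fun j => pd j (grad φ (a, i)) x ^ 2) (fun _ _ => sq_nonneg _)
    (Finset.mem_univ i)

end PointwiseBounds

section Nonlinearities

variable {n : ℕ} {ι : Type*}

/-- The velocity and the gradient of the director as a single family: the unknowns of the system
that have the same regularity. -/
def fields (u : Fin n → EuclideanSpace ℝ (Fin n) → ℝ) (d : ι → EuclideanSpace ℝ (Fin n) → ℝ) :
    Fin n ⊕ ι × Fin n → EuclideanSpace ℝ (Fin n) → ℝ :=
  Sum.elim u (grad d)

section Components

variable {u : Fin n → EuclideanSpace ℝ (Fin n) → ℝ} {d : ι → EuclideanSpace ℝ (Fin n) → ℝ}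

theorem fields_inl (j : Fin n) : fields u d (.inl j) = u j := rfl

theorem fields_inr (p : ι × Fin n) : fields u d (.inr p) = pd p.2 (d p.1) := rfl

theorem contDiff_fields (hu : ∀ j, ContDiff ℝ ∞ (u j)) (hd : ∀ k, ContDiff ℝ ∞ (d k)) (a) :
    ContDiff ℝ ∞ (fields u d a) :=
  match a with
  | .inl j => hu j
  | .inr p => contDiff_grad hd p

end Components

variable [Fintype ι]

/-- The nonlinear part `(u·∇)u + ∇·(∇d⊙∇d)` of the momentum equation. -/
def momentumNonlinearity (u : Fin n → EuclideanSpace ℝ (Fin n) → ℝ)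
    (d : ι → EuclideanSpace ℝ (Fin n) → ℝ) (j : Fin n) (x : EuclideanSpace ℝ (Fin n)) : ℝ :=
  ∑ i, u i x * pd i (u j) x + ∑ i, pd i (fun y => ∑ k, pd i (d k) y * pd j (d k) y) x

/-- The nonlinear part `(u·∇)d − |∇d|²d` of the director equation. -/
def directorNonlinearity (u : Fin n → EuclideanSpace ℝ (Fin n) → ℝ)
    (d : ι → EuclideanSpace ℝ (Fin n) → ℝ) (k : ι) (x : EuclideanSpace ℝ (Fin n)) : ℝ :=
  ∑ i, u i x * pd i (d k) x - sumSq (grad d) x * d k x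

variable {u : Fin n → EuclideanSpace ℝ (Fin n) → ℝ} {d : ι → EuclideanSpace ℝ (Fin n) → ℝ}

theorem sumSq_grad_fields (u : Fin n → EuclideanSpace ℝ (Fin n) → ℝ)
    (d : ι → EuclideanSpace ℝ (Fin n) → ℝ) (x : EuclideanSpace ℝ (Fin n)) :
    sumSq (grad (fields u d)) x = sumSq (grad u) x + sumSq (grad (grad d)) x := by
  simp only [sumSq_grad (fields u d), Fintype.sum_sum_type]
  rw [sumSq_grad, sumSq_grad]
  rfl

theorem majorant_grad_le_majorant_fields (u : Fin n → EuclideanSpace ℝ (Fin n) → ℝ)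
    (d : ι → EuclideanSpace ℝ (Fin n) → ℝ) (x : EuclideanSpace ℝ (Fin n)) :
    majorant (grad d) x ≤ majorant (fields u d) x :=
  majorant_comp_le Sum.inr_injective (fields u d) x

theorem abs_pd_momentumNonlinearity_le (hu : ∀ j, ContDiff ℝ ∞ (u j))
    (hd : ∀ k, ContDiff ℝ ∞ (d k)) (j l : Fin n) (x : EuclideanSpace ℝ (Fin n)) :
    |pd l (momentumNonlinearity u d j) x| ≤
      (n + n * (Fintype.card ι * 2)) * majorant (fields u d) x := by
  have hφ := contDiff_fields hu hd
  have hconv i : ContDiff ℝ ∞ fun y => u i y * pd i (u j) y := (hu i).mul (contDiff_pd (hu j) i)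
  have hstress i k : ContDiff ℝ ∞ fun y => pd i (d k) y * pd j (d k) y :=
    (contDiff_pd (hd k) i).mul (contDiff_pd (hd k) j)
  have hsum i : ContDiff ℝ ∞ (pd i fun y => ∑ k, pd i (d k) y * pd j (d k) y) :=
    contDiff_pd (ContDiff.sum fun k _ => hstress i k) i
  have pd_convection : |pd l (fun y => ∑ i, u i y * pd i (u j) y) x| ≤
      n * majorant (fields u d) x := by
    rw [pd_sum _ fun i _ => (hconv i).differentiable (by simp) x]
    simpa only [Fintype.card_fin, fields_inl] using
      abs_sum_le_card_mul fun i => abs_pd_mul_pd_le_majorant hφ (.inl i) (.inl j) l i x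
  have pd_stress :
      |pd l (fun y => ∑ i, pd i (fun z => ∑ k, pd i (d k) z * pd j (d k) z) y) x| ≤
      n * (Fintype.card ι * (2 * majorant (fields u d) x)) := by
    have pd_sum_eq i : pd i (fun z => ∑ k, pd i (d k) z * pd j (d k) z) =
        fun y => ∑ k, pd i (fun z => pd i (d k) z * pd j (d k) z) y :=
      funext fun y => pd_sum _ (fun k _ => (hstress i k).differentiable (by simp) y) i
    rw [pd_sum _ fun i _ => (hsum i).differentiable (by simp) x]
    simp only [pd_sum_eq, pd_sum _ fun k _ => differentiable_pd (hstress _ k) _ x]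
    simpa only [Fintype.card_fin, fields_inr] using
      abs_sum_le_card_mul fun i => abs_sum_le_card_mul fun k =>
        abs_pd_pd_mul_le_majorant hφ (.inr (k, i)) (.inr (k, j)) l i x
  have split := pd_add
    ((ContDiff.sum (s := Finset.univ) fun i _ => hconv i).differentiable (by simp) x)
    ((ContDiff.sum (s := Finset.univ) fun i _ => hsum i).differentiable (by simp) x) l
  refine (congrArg abs split).trans_le ((abs_add_le _ _).trans
    ((add_le_add pd_convection pd_stress).trans_eq ?_))
  ring

theorem abs_lap_convection_le (hu : ∀ j, ContDiff ℝ ∞ (u j)) (hd : ∀ k, ContDiff ℝ ∞ (d k)) (k : ι)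
    (x : EuclideanSpace ℝ (Fin n)) :
    |lap (fun y => ∑ i, u i y * pd i (d k) y) x| ≤ n * (n * (2 * majorant (fields u d) x)) := by
  rw [lap_sum _ fun i => (hu i).mul (contDiff_pd (hd k) i)]
  simpa only [Fintype.card_fin, fields_inl, fields_inr] using abs_sum_le_card_mul fun i =>
    abs_lap_mul_le_majorant (contDiff_fields hu hd) (.inl i) (.inr (k, i)) x

section UnitLength

theorem sq_sumSq_grad_le_sumSq_lap (hd : ∀ k, ContDiff ℝ ∞ (d k)) (hunit : ∀ x, sumSq d x = 1)
    (x : EuclideanSpace ℝ (Fin n)) : sumSq (grad d) x ^ 2 ≤ sumSq (lap ∘ d) x := by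
  have lap_eq_zero : lap (sumSq d) x = 0 := by
    simp [funext hunit, lap, pd]
  have sumSq_grad_eq : sumSq (grad d) x = -∑ k, d k x * lap (d k) x := by
    linarith [lap_sumSq hd x]
  calc sumSq (grad d) x ^ 2 = (∑ k, d k x * lap (d k) x) ^ 2 := by rw [sumSq_grad_eq, neg_sq]
    _ ≤ sumSq d x * sumSq (lap ∘ d) x := Finset.sum_mul_sq_le_sq_mul_sq ..
    _ = sumSq (lap ∘ d) x := by rw [hunit, one_mul]

theorem abs_pd_sumSq_grad_mul_pd_le (hd : ∀ k, ContDiff ℝ ∞ (d k)) (hunit : ∀ x, sumSq d x = 1)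
    (i : Fin n) (k : ι) (x : EuclideanSpace ℝ (Fin n)) :
    |pd i (sumSq (grad d)) x * pd i (d k) x| ≤ (n + 1) * sumSq (grad (grad d)) x := by
  have hQ := sumSq_nonneg (grad d) x
  have hH := sumSq_nonneg (grad (grad d)) x
  refine abs_le_of_sq_le_sq ?_ (by positivity)
  calc (pd i (sumSq (grad d)) x * pd i (d k) x) ^ 2
      ≤ 4 * (sumSq (grad d) x * sumSq (grad (grad d)) x) * sumSq (grad d) x := by
        rw [mul_pow]
        gcongr
        · exact sq_pd_sumSq_le (contDiff_grad hd) i x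
        · exact sq_le_sumSq (grad d) (k, i) x
    _ = 4 * sumSq (grad d) x ^ 2 * sumSq (grad (grad d)) x := by ring
    _ ≤ 4 * (n * sumSq (grad (grad d)) x) * sumSq (grad (grad d)) x := by
        gcongr
        exact (sq_sumSq_grad_le_sumSq_lap hd hunit x).trans (sumSq_lap_le d x)
    _ ≤ ((n + 1) * sumSq (grad (grad d)) x) ^ 2 := by
        nlinarith [mul_nonneg (sq_nonneg ((n : ℝ) - 1)) (sq_nonneg (sumSq (grad (grad d)) x))]

theorem abs_sumSq_grad_mul_lap_le (hd : ∀ k, ContDiff ℝ ∞ (d k)) (hunit : ∀ x, sumSq d x = 1)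
    (k : ι) (x : EuclideanSpace ℝ (Fin n)) :
    |sumSq (grad d) x * lap (d k) x| ≤ n * sumSq (grad (grad d)) x := by
  have hL := sumSq_nonneg (lap ∘ d) x
  refine (abs_le_of_sq_le_sq ?_ hL).trans (sumSq_lap_le d x)
  rw [mul_pow, pow_two (sumSq (lap ∘ d) x)]
  exact mul_le_mul (sq_sumSq_grad_le_sumSq_lap hd hunit x) (sq_le_sumSq (lap ∘ d) k x)
    (sq_nonneg _) hL

theorem abs_lap_sumSq_grad_mul_le (hd : ∀ k, ContDiff ℝ ∞ (d k)) (hunit : ∀ x, sumSq d x = 1)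
    (k : ι) (x : EuclideanSpace ℝ (Fin n)) :
    |lap (fun y => sumSq (grad d) y * d k y) x| ≤
      Fintype.card (ι × Fin n) * (n * (2 * majorant (grad d) x)) +
        (2 * (n * (n + 1)) + n) * sumSq (grad (grad d)) x := by
  have abs_le_one : |d k x| ≤ 1 := by
    rw [← sq_le_one_iff_abs_le_one, ← hunit x]
    exact sq_le_sumSq d k x
  have lap_le : |lap (sumSq (grad d)) x * d k x| ≤
      Fintype.card (ι × Fin n) * (n * (2 * majorant (grad d) x)) := by
    rw [abs_mul]
    exact (mul_le_of_le_one_right (abs_nonneg _) abs_le_one).trans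
      (abs_lap_sumSq_le_majorant (contDiff_grad hd) x)
  have pd_le := abs_sum_le_card_mul fun i => abs_pd_sumSq_grad_mul_pd_le hd hunit i k x
  rw [Fintype.card_fin] at pd_le
  rw [lap_mul (contDiff_sumSq (contDiff_grad hd)) (hd k)]
  refine (abs_add_three _ _ _).trans ?_
  rw [abs_mul 2, abs_two]
  linarith [abs_sumSq_grad_mul_lap_le hd hunit k x]

end UnitLength

theorem abs_lap_directorNonlinearity_le (hu : ∀ j, ContDiff ℝ ∞ (u j))
    (hd : ∀ k, ContDiff ℝ ∞ (d k)) (hunit : ∀ x, sumSq d x = 1) (k : ι)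
    (x : EuclideanSpace ℝ (Fin n)) :
    |lap (directorNonlinearity u d k) x| ≤
      (n * (n * 2) + (Fintype.card (ι × Fin n) * (n * 2) + (2 * (n * (n + 1)) + n))) *
        majorant (fields u d) x := by
  have split := lap_sub
    (ContDiff.sum (s := Finset.univ) fun i _ => (hu i).mul (contDiff_pd (hd k) i))
    ((contDiff_sumSq (contDiff_grad hd)).mul (hd k)) x
  calc |lap (directorNonlinearity u d k) x|
      ≤ n * (n * (2 * majorant (fields u d) x)) +
          (Fintype.card (ι × Fin n) * (n * (2 * majorant (grad d) x)) +
            (2 * (n * (n + 1)) + n) * sumSq (grad (grad d)) x) :=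
        (congrArg abs split).trans_le ((abs_sub _ _).trans
          (add_le_add (abs_lap_convection_le hu hd k x) (abs_lap_sumSq_grad_mul_le hd hunit k x)))
    _ ≤ n * (n * (2 * majorant (fields u d) x)) +
          (Fintype.card (ι × Fin n) * (n * (2 * majorant (fields u d) x)) +
            (2 * (n * (n + 1)) + n) * majorant (fields u d) x) := by
        gcongr
        · exact majorant_grad_le_majorant_fields u d x
        · exact (le_add_of_nonneg_left (Real.sqrt_nonneg _)).trans
            (majorant_grad_le_majorant_fields u d x)
    _ = _ := by ring

end Nonlinearities

section Slice

theorem integral_mul_le {n : ℕ} {f g : EuclideanSpace ℝ (Fin n) → ℝ} (hf : IsSchwartz f)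
    (hg : IsSchwartz g) : ∫ x, f x * g x ≤ 4⁻¹ * (∫ x, f x ^ 2) + ∫ x, g x ^ 2 := by
  rw [← integral_const_mul, ← integral_add (hf.sq.integrable.const_mul _) hg.sq.integrable]
  refine integral_mono (hf.mul hg).integrable
    ((hf.sq.integrable.const_mul _).add hg.sq.integrable) fun x => ?_
  linarith [sq_nonneg (2⁻¹ * f x - g x)]

theorem sum_integral_mul_pd_eq_zero {n : ℕ} {w : Fin n → EuclideanSpace ℝ (Fin n) → ℝ}
    {p : EuclideanSpace ℝ (Fin n) → ℝ} (hw : ∀ j, IsSchwartz (w j)) (hp : IsSchwartz p)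
    (hdiv : ∀ x, ∑ j, pd j (w j) x = 0) : ∑ j, ∫ x, w j x * pd j p x = 0 := by
  simp_rw [integral_mul_pd (hw _) hp, Finset.sum_neg_distrib, neg_eq_zero,
    ← integral_finsetSum _ fun j _ => (((hw j).pd j).mul hp).integrable, ← Finset.sum_mul, hdiv,
    zero_mul, integral_zero]

/-- A solution of the liquid crystal system at a fixed time, with values in the unit sphere of
`ℝ^ι`; `V` and `F` stand for the time derivatives of the velocity `u` and of the director `d`. -/
structure IsNLCSlice {n : ℕ} {ι : Type*} [Fintype ι]
    (u V : Fin n → EuclideanSpace ℝ (Fin n) → ℝ) (d F : ι → EuclideanSpace ℝ (Fin n) → ℝ)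
    (P : EuclideanSpace ℝ (Fin n) → ℝ) : Prop where
  isSchwartz_u : ∀ j, IsSchwartz (u j)
  isSchwartz_V : ∀ j, IsSchwartz (V j)
  contDiff_d : ∀ k, ContDiff ℝ ∞ (d k)
  contDiff_F : ∀ k, ContDiff ℝ ∞ (F k)
  isSchwartz_grad_d : ∀ p, IsSchwartz (grad d p)
  isSchwartz_grad_F : ∀ p, IsSchwartz (grad F p)
  contDiff_P : ContDiff ℝ ∞ P
  divfree : ∀ x, ∑ j, pd j (u j) x = 0
  unit : ∀ x, sumSq d x = 1
  momentum : ∀ j x, V j x = lap (u j) x - momentumNonlinearity u d j x - pd j P x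
  director : ∀ k x, F k x = lap (d k) x - directorNonlinearity u d k x

namespace IsNLCSlice

variable {n : ℕ} {ι : Type*} [Fintype ι] {u V : Fin n → EuclideanSpace ℝ (Fin n) → ℝ}
  {d F : ι → EuclideanSpace ℝ (Fin n) → ℝ} {P : EuclideanSpace ℝ (Fin n) → ℝ}

theorem isSchwartz_fields (h : IsNLCSlice u V d F P) (a) : IsSchwartz (fields u d a) :=
  match a with
  | .inl j => h.isSchwartz_u j
  | .inr p => h.isSchwartz_grad_d p

theorem isSchwartz_momentumNonlinearity (h : IsNLCSlice u V d F P) (j : Fin n) :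
    IsSchwartz (momentumNonlinearity u d j) :=
  .add (.sum _ fun i => (h.isSchwartz_u i).mul ((h.isSchwartz_u j).pd i))
    (.sum _ fun i => .pd (.sum _ fun k =>
      (h.isSchwartz_grad_d (k, i)).mul (h.isSchwartz_grad_d (k, j))) i)

theorem isSchwartz_pd_pressure (h : IsNLCSlice u V d F P) (j : Fin n) : IsSchwartz (pd j P) := by
  have pd_eq : pd j P = fun x => lap (u j) x - momentumNonlinearity u d j x - V j x :=
    funext fun x => by linarith [h.momentum j x]
  rw [pd_eq]
  exact ((h.isSchwartz_u j).lap.sub (h.isSchwartz_momentumNonlinearity j)).sub (h.isSchwartz_V j)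

theorem sum_pd_lap_velocity (h : IsNLCSlice u V d F P) (x : EuclideanSpace ℝ (Fin n)) :
    ∑ j, pd j (lap (u j)) x = 0 := by
  have hu j := (h.isSchwartz_u j).contDiff
  simp_rw [pd_lap (hu _)]
  rw [← lap_sum _ fun j => contDiff_pd (hu j) j, funext h.divfree]
  simp [lap, pd]

theorem lap_velocity_deriv (h : IsNLCSlice u V d F P) (j : Fin n) (x : EuclideanSpace ℝ (Fin n)) :
    lap (V j) x = lap (lap (u j)) x - lap (momentumNonlinearity u d j) x - pd j (lap P) x := by
  have hlap := (h.isSchwartz_u j).lap.contDiff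
  have hN := (h.isSchwartz_momentumNonlinearity j).contDiff
  rw [funext (h.momentum j), lap_sub (hlap.sub hN) (contDiff_pd h.contDiff_P j), lap_sub hlap hN,
    pd_lap h.contDiff_P]

theorem sum_integral_lap_velocity_mul_lap (h : IsNLCSlice u V d F P) :
    ∑ j, ∫ x, lap (u j) x * lap (V j) x = ∑ j, ∑ l,
      ((∫ x, pd l (lap (u j)) x * pd l (momentumNonlinearity u d j) x) -
        ∫ x, pd l (lap (u j)) x ^ 2) := by
  have hlap j : IsSchwartz (lap (u j)) := (h.isSchwartz_u j).lap
  have hN := h.isSchwartz_momentumNonlinearity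
  have hlapP : IsSchwartz (lap P) := .sum _ fun i => (h.isSchwartz_pd_pressure i).pd i
  have pressure_drops : ∑ j, ∫ x, lap (u j) x * pd j (lap P) x = 0 :=
    sum_integral_mul_pd_eq_zero hlap hlapP h.sum_pd_lap_velocity
  have expand j : ∫ x, lap (u j) x * lap (V j) x = (∫ x, lap (u j) x * lap (lap (u j)) x) -
      (∫ x, lap (u j) x * lap (momentumNonlinearity u d j) x) -
        ∫ x, lap (u j) x * pd j (lap P) x := by
    simp_rw [h.lap_velocity_deriv, mul_sub]
    rw [integral_sub (((hlap j).mul (hlap j).lap).sub ((hlap j).mul (hN j).lap)).integrable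
      ((hlap j).mul (hlapP.pd j)).integrable, integral_sub ((hlap j).mul (hlap j).lap).integrable
      ((hlap j).mul (hN j).lap).integrable]
  have green {f : EuclideanSpace ℝ (Fin n) → ℝ} (hf : IsSchwartz f) (j : Fin n) :
      ∫ x, lap (u j) x * lap f x = -∑ l, ∫ x, pd l (lap (u j)) x * pd l f x := by
    rw [sum_integral_pd_mul_pd (hlap j) hf, neg_neg]
  simp_rw [expand, Finset.sum_sub_distrib, pressure_drops, green (hN _), green (hlap _), pow_two,
    Finset.sum_neg_distrib]
  ring

theorem lap_directorNonlinearity_eq (h : IsNLCSlice u V d F P) (k : ι) :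
    lap (directorNonlinearity u d k) = fun x => lap (lap (d k)) x - lap (F k) x := by
  have nonlinearity_eq : directorNonlinearity u d k = fun x => lap (d k) x - F k x :=
    funext fun x => by linarith [h.director k x]
  rw [nonlinearity_eq]
  exact funext (lap_sub (contDiff_lap (h.contDiff_d k)) (h.contDiff_F k))

theorem isSchwartz_lap_director (h : IsNLCSlice u V d F P) (k : ι) : IsSchwartz (lap (d k)) :=
  isSchwartz_lap_of_grad h.isSchwartz_grad_d k

theorem isSchwartz_lap_directorNonlinearity (h : IsNLCSlice u V d F P) (k : ι) :
    IsSchwartz (lap (directorNonlinearity u d k)) := by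
  rw [h.lap_directorNonlinearity_eq k]
  exact (h.isSchwartz_lap_director k).lap.sub (isSchwartz_lap_of_grad h.isSchwartz_grad_F k)

theorem sum_integral_lap_grad_director_mul_lap (h : IsNLCSlice u V d F P) :
    ∑ p, ∫ x, lap (grad d p) x * lap (grad F p) x = ∑ k,
      ((∫ x, lap (lap (d k)) x * lap (directorNonlinearity u d k) x) -
        ∫ x, lap (lap (d k)) x ^ 2) := by
  have hlap := h.isSchwartz_lap_director
  have hlapF k : IsSchwartz (lap (F k)) := isSchwartz_lap_of_grad h.isSchwartz_grad_F k
  have lap_grad (φ : ι → EuclideanSpace ℝ (Fin n) → ℝ) (hφ : ∀ k, ContDiff ℝ ∞ (φ k)) k i :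
      lap (grad φ (k, i)) = pd i (lap (φ k)) := (pd_lap (hφ k) i).symm
  rw [Fintype.sum_prod_type]
  refine Finset.sum_congr rfl fun k _ => ?_
  simp_rw [lap_grad d h.contDiff_d, lap_grad F h.contDiff_F, mul_comm (pd _ (lap (d k)) _)]
  rw [sum_integral_pd_mul_pd (hlapF k) (hlap k), ← integral_neg,
    ← integral_sub ((hlap k).lap.mul (h.isSchwartz_lap_directorNonlinearity k)).integrable
      (hlap k).lap.sq.integrable, h.lap_directorNonlinearity_eq k]
  refine integral_congr_ae (.of_forall fun x => ?_)
  ring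

theorem integral_sumSq_grad_grad_grad_fields (h : IsNLCSlice u V d F P) :
    ∫ x, sumSq (grad (grad (grad (fields u d)))) x =
      (∑ j, ∑ l, ∫ x, pd l (lap (u j)) x ^ 2) + ∑ k, ∫ x, lap (lap (d k)) x ^ 2 := by
  have hu j := (h.isSchwartz_u j).contDiff
  have hφ := contDiff_fields hu h.contDiff_d
  have hlapu j : IsSchwartz ((lap ∘ u) j) := (h.isSchwartz_u j).lap
  have hlapd k : IsSchwartz ((lap ∘ d) k) := h.isSchwartz_lap_director k
  have hlapd' k : IsSchwartz ((lap ∘ lap ∘ d) k) := (hlapd k).lap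
  have lap_fields : lap ∘ fields u d = fields (lap ∘ u) (lap ∘ d) := by
    rw [fields, Sum.comp_elim, lap_comp_grad h.contDiff_d]
    rfl
  rw [integral_sumSq_grad_grad (contDiff_grad hφ)
    (IsSchwartz.grad (IsSchwartz.grad h.isSchwartz_fields)), lap_comp_grad hφ, lap_fields]
  simp_rw [sumSq_grad_fields]
  rw [integral_add (IsSchwartz.sumSq (IsSchwartz.grad hlapu)).integrable
    (IsSchwartz.sumSq (IsSchwartz.grad (IsSchwartz.grad hlapd))).integrable,
    integral_sumSq (IsSchwartz.grad hlapu), Fintype.sum_prod_type,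
    integral_sumSq_grad_grad (fun k => (hlapd k).contDiff) (IsSchwartz.grad hlapd),
    integral_sumSq hlapd']
  rfl

theorem sum_integral_lap_mul_lap_le (h : IsNLCSlice u V d F P) {A B : ℝ}
    (hA : ∀ j l, ∫ x, pd l (momentumNonlinearity u d j) x ^ 2 ≤ A)
    (hB : ∀ k, ∫ x, lap (directorNonlinearity u d k) x ^ 2 ≤ B) :
    ∑ a, ∫ x, lap (fields u d a) x * lap (fields V F a) x ≤
      -(3 / 4) * (∫ x, sumSq (grad (grad (grad (fields u d)))) x) +
        (n ^ 2 * A + Fintype.card ι * B) := by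
  have velocity_le : ∑ j, ∫ x, lap (u j) x * lap (V j) x ≤
      -(3 / 4) * (∑ j, ∑ l, ∫ x, pd l (lap (u j)) x ^ 2) + n ^ 2 * A := by
    calc ∑ j, ∫ x, lap (u j) x * lap (V j) x
        ≤ ∑ j, ∑ l, (-(3 / 4) * (∫ x, pd l (lap (u j)) x ^ 2) + A) := by
          rw [h.sum_integral_lap_velocity_mul_lap]
          gcongr with j _ l _
          linarith [hA j l, integral_mul_le ((h.isSchwartz_u j).lap.pd l)
            ((h.isSchwartz_momentumNonlinearity j).pd l)]
      _ = _ := by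
          simp only [Finset.sum_add_distrib, ← Finset.mul_sum, Finset.sum_const, Finset.card_univ,
            Fintype.card_fin, nsmul_eq_mul]
          ring
  have director_le : ∑ p, ∫ x, lap (grad d p) x * lap (grad F p) x ≤
      -(3 / 4) * (∑ k, ∫ x, lap (lap (d k)) x ^ 2) + Fintype.card ι * B := by
    calc ∑ p, ∫ x, lap (grad d p) x * lap (grad F p) x
        ≤ ∑ k, (-(3 / 4) * (∫ x, lap (lap (d k)) x ^ 2) + B) := by
          rw [h.sum_integral_lap_grad_director_mul_lap]
          gcongr with k _
          linarith [hB k, integral_mul_le (h.isSchwartz_lap_director k).lap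
            (h.isSchwartz_lap_directorNonlinearity k)]
      _ = _ := by
          simp only [Finset.sum_add_distrib, ← Finset.mul_sum, Finset.sum_const, Finset.card_univ,
            nsmul_eq_mul]
  rw [Fintype.sum_sum_type, h.integral_sumSq_grad_grad_grad_fields]
  refine (add_le_add velocity_le director_le).trans_eq ?_
  ring

end IsNLCSlice

theorem exists_energy_inequality (ι : Type*) [Fintype ι] (κ : ℝ) :
    ∃ C : ℝ, 0 ≤ C ∧ ∀ (u V : Fin 2 → EuclideanSpace ℝ (Fin 2) → ℝ)
      (d F : ι → EuclideanSpace ℝ (Fin 2) → ℝ) (P : EuclideanSpace ℝ (Fin 2) → ℝ),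
      IsNLCSlice u V d F P → ∫ x, sumSq (fields u d) x ≤ κ →
      2 * (∑ a, ∫ x, lap (fields u d a) x * lap (fields V F a) x) +
          2⁻¹ * ∫ x, sumSq (grad (grad (grad (fields u d)))) x ≤
        C * (∫ x, sumSq (grad (fields u d)) x) ^ 3 := by
  obtain ⟨ε, hε, absorb⟩ : ∃ ε > 0, (4 + (Fintype.card ι : ℝ)) * ε = 2⁻¹ :=
    ⟨2⁻¹ / (4 + Fintype.card ι), by positivity, mul_div_cancel₀ _ (by positivity)⟩
  obtain ⟨C₁, hC₁, momentum_le⟩ := exists_integral_sq_le_of_abs_le_majorant (Fin 2 ⊕ ι × Fin 2)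
    ((2 : ℕ) + (2 : ℕ) * (Fintype.card ι * 2)) κ hε
  obtain ⟨C₂, hC₂, director_le⟩ := exists_integral_sq_le_of_abs_le_majorant (Fin 2 ⊕ ι × Fin 2)
    ((2 : ℕ) * ((2 : ℕ) * 2) + (Fintype.card (ι × Fin 2) * ((2 : ℕ) * 2) +
      (2 * ((2 : ℕ) * ((2 : ℕ) + 1)) + (2 : ℕ)))) κ hε
  refine ⟨2 * (4 * C₁ + Fintype.card ι * C₂), by positivity, fun u V d F P h hκ => ?_⟩
  have hu j := (h.isSchwartz_u j).contDiff
  have energy_le := h.sum_integral_lap_mul_lap_le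
    (fun j l => momentum_le _ _ h.isSchwartz_fields hκ ((h.isSchwartz_momentumNonlinearity j).pd l)
      (abs_pd_momentumNonlinearity_le hu h.contDiff_d j l))
    (fun k => director_le _ _ h.isSchwartz_fields hκ (h.isSchwartz_lap_directorNonlinearity k)
      (abs_lap_directorNonlinearity_le hu h.contDiff_d h.unit k))
  push_cast at energy_le
  linear_combination 2 * energy_le + 2 * (∫ x, sumSq (grad (grad (grad (fields u d)))) x) * absorb

end Slice

section TimeDependence

section NormedSpace

variable {E : Type*} [NormedAddCommGroup E] [NormedSpace ℝ E] {f : ℝ → E → ℝ}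

/-- The derivative in time of a time-dependent scalar field, at fixed points of space. -/
def timeDeriv (f : ℝ → E → ℝ) (t : ℝ) (x : E) : ℝ := deriv (fun s => f s x) t

theorem contDiff_apply_of_uncurry {F : Type*} [NormedAddCommGroup F] [NormedSpace ℝ F]
    {f : ℝ → E → F} (hf : ContDiff ℝ ∞ (Function.uncurry f)) (t : ℝ) : ContDiff ℝ ∞ (f t) :=
  hf.comp (contDiff_prodMk_right t)

theorem hasDerivAt_timeDeriv (hf : ContDiff ℝ ∞ (Function.uncurry f)) (t : ℝ) (x : E) :
    HasDerivAt (fun s => f s x) (timeDeriv f t x) t :=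
  ((hf.comp (contDiff_prodMk_left x)).differentiable (by simp) t).hasDerivAt

theorem uncurry_timeDeriv (hf : ContDiff ℝ ∞ (Function.uncurry f)) :
    Function.uncurry (timeDeriv f) = fun p => fderiv ℝ (Function.uncurry f) p (1, 0) := by
  ext ⟨t, x⟩
  exact ((hf.differentiable (by simp) (t, x)).hasFDerivAt.comp_hasDerivAt_of_eq t
    ((hasDerivAt_id t).prodMk (hasDerivAt_const t x)) rfl).deriv

theorem contDiff_uncurry_timeDeriv (hf : ContDiff ℝ ∞ (Function.uncurry f)) :
    ContDiff ℝ ∞ (Function.uncurry (timeDeriv f)) := by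
  rw [uncurry_timeDeriv hf]
  exact (hf.fderiv_right (m := ∞) (by simp)).clm_apply contDiff_const

end NormedSpace

variable {n : ℕ} {f : ℝ → EuclideanSpace ℝ (Fin n) → ℝ}

theorem uncurry_pd (hf : ContDiff ℝ ∞ (Function.uncurry f)) (i : Fin n) :
    (Function.uncurry fun t => pd i (f t)) =
      fun p => fderiv ℝ (Function.uncurry f) p (0, EuclideanSpace.single i 1) := by
  ext ⟨t, x⟩
  have hasFDerivAt := (hf.differentiable (by simp) (t, x)).hasFDerivAt.comp x
    (hasFDerivAt_prodMk_right t x)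
  exact DFunLike.congr_fun hasFDerivAt.fderiv (EuclideanSpace.single i 1)

theorem contDiff_uncurry_pd (hf : ContDiff ℝ ∞ (Function.uncurry f)) (i : Fin n) :
    ContDiff ℝ ∞ (Function.uncurry fun t => pd i (f t)) := by
  rw [uncurry_pd hf]
  exact (hf.fderiv_right (m := ∞) (by simp)).clm_apply contDiff_const

theorem contDiff_uncurry_lap (hf : ContDiff ℝ ∞ (Function.uncurry f)) :
    ContDiff ℝ ∞ (Function.uncurry fun t => lap (f t)) :=
  ContDiff.sum (s := Finset.univ) fun i _ => contDiff_uncurry_pd (contDiff_uncurry_pd hf i) i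

theorem timeDeriv_pd (hf : ContDiff ℝ ∞ (Function.uncurry f)) (i : Fin n) (t : ℝ) :
    timeDeriv (fun s => pd i (f s)) t = pd i (timeDeriv f t) := by
  ext x
  have timeDeriv_eq := congr_fun (uncurry_timeDeriv (contDiff_uncurry_pd hf i)) (t, x)
  have pd_eq := congr_fun (uncurry_pd (contDiff_uncurry_timeDeriv hf) i) (t, x)
  rw [uncurry_pd hf, fderiv_fderiv_apply_comm hf, ← uncurry_timeDeriv hf] at timeDeriv_eq
  exact timeDeriv_eq.trans pd_eq.symm

theorem timeDeriv_lap (hf : ContDiff ℝ ∞ (Function.uncurry f)) (t : ℝ) :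
    timeDeriv (fun s => lap (f s)) t = lap (timeDeriv f t) := by
  ext x
  refine (HasDerivAt.fun_sum fun i _ => ?_).deriv
  have hpd := contDiff_uncurry_pd hf i
  simpa only [timeDeriv_pd hpd, timeDeriv_pd hf] using
    hasDerivAt_timeDeriv (contDiff_uncurry_pd hpd i) t x

end TimeDependence

namespace SchwartzFamily

variable {n : ℕ} {T t : ℝ} {f : ℝ → EuclideanSpace ℝ (Fin n) → ℝ}

theorem iff_eventually : SchwartzFamily T f ↔ ∀ t ∈ Set.Ioo 0 T, ∀ k l : ℕ, ∃ C : ℝ,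
    ∀ᶠ s in nhds t, ∀ x, ‖x‖ ^ k * ‖iteratedFDeriv ℝ l (f s) x‖ ≤ C := by
  refine forall₄_congr fun t ht k l => ⟨fun ⟨ε, hε, C, hC⟩ => ⟨C, ?_⟩, fun ⟨C, hC⟩ => ?_⟩
  · filter_upwards [isOpen_Ioo.mem_nhds ht, Metric.ball_mem_nhds t hε] with s hs hst
    exact hC s hs hst
  · obtain ⟨ε, hε, hball⟩ := Metric.eventually_nhds_iff.1 hC
    exact ⟨ε, hε, C, fun s _ hst => hball hst⟩

theorem isSchwartz (h : SchwartzFamily T f) (ht : t ∈ Set.Ioo 0 T) (hf : ContDiff ℝ ∞ (f t)) :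
    IsSchwartz (f t) := by
  refine ⟨⟨f t, hf, fun k l => ?_⟩, rfl⟩
  obtain ⟨C, hC⟩ := iff_eventually.1 h t ht k l
  exact ⟨C, hC.self_of_nhds⟩

theorem pd (h : SchwartzFamily T f) (hf : ∀ s, ContDiff ℝ ∞ (f s)) (i : Fin n) :
    SchwartzFamily T fun s => pd i (f s) := by
  refine iff_eventually.2 fun t ht k l => ?_
  obtain ⟨C, hC⟩ := iff_eventually.1 h t ht k (l + 1)
  refine ⟨C, hC.mono fun s hs x => le_trans ?_ (hs x)⟩
  have iteratedFDeriv_le := norm_iteratedFDeriv_clm_apply_const (N := l) (n := l)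
    (c := EuclideanSpace.single i (1 : ℝ))
    (((hf s).fderiv_right (m := l) (mod_cast le_top)).contDiffAt (x := x)) le_rfl
  rw [PiLp.norm_single, norm_one, one_mul, norm_iteratedFDeriv_fderiv]
    at iteratedFDeriv_le
  exact mul_le_mul_of_nonneg_left iteratedFDeriv_le (by positivity)

theorem sum {ι : Type*} [Fintype ι] {f : ι → ℝ → EuclideanSpace ℝ (Fin n) → ℝ}
    (h : ∀ a, SchwartzFamily T (f a)) (hf : ∀ a s, ContDiff ℝ ∞ (f a s)) :
    SchwartzFamily T fun s x => ∑ a, f a s x := by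
  refine iff_eventually.2 fun t ht k l => ?_
  choose C hC using fun a => iff_eventually.1 (h a) t ht k l
  refine ⟨∑ a, C a, (Filter.eventually_all.2 hC).mono fun s hs x => ?_⟩
  rw [iteratedFDeriv_sum fun a _ => (hf a s).of_le (mod_cast le_top), Finset.sum_apply]
  calc ‖x‖ ^ k * ‖∑ a, iteratedFDeriv ℝ l (f a s) x‖
      ≤ ‖x‖ ^ k * ∑ a, ‖iteratedFDeriv ℝ l (f a s) x‖ := by
        gcongr
        exact norm_sum_le _ _
    _ = ∑ a, ‖x‖ ^ k * ‖iteratedFDeriv ℝ l (f a s) x‖ := Finset.mul_sum ..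
    _ ≤ ∑ a, C a := Finset.sum_le_sum fun a _ => hs a x

theorem lap (h : SchwartzFamily T f) (hf : ∀ s, ContDiff ℝ ∞ (f s)) :
    SchwartzFamily T fun s => lap (f s) :=
  .sum (fun i => (h.pd hf i).pd (fun s => contDiff_pd (hf s) i) i)
    fun i s => contDiff_pd (contDiff_pd (hf s) i) i

theorem exists_eventually_abs_le (h : SchwartzFamily T f) (ht : t ∈ Set.Ioo 0 T) (r : ℕ) :
    ∃ C : ℝ, ∀ᶠ s in nhds t, ∀ x, |f s x| ≤ C * (1 + ‖x‖) ^ (-(r : ℝ)) := by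
  obtain ⟨C₀, hC₀⟩ := iff_eventually.1 h t ht 0 0
  obtain ⟨C, hC⟩ := iff_eventually.1 h t ht r 0
  refine ⟨2 ^ r * (C₀ + C), ?_⟩
  filter_upwards [hC₀, hC] with s hs₀ hs x
  simpa using pow_mul_le_of_le_of_pow_mul_le (k := 0) (l := r) (norm_nonneg x)
    (abs_nonneg (f s x)) (by simpa using hs₀ x) (by simpa using hs x)

theorem hasDerivAt_integral_sq (h : SchwartzFamily T f) (h' : SchwartzFamily T (timeDeriv f))
    (hf : ContDiff ℝ ∞ (Function.uncurry f)) (ht : t ∈ Set.Ioo 0 T) :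
    HasDerivAt (fun s => ∫ x, f s x ^ 2) (2 * ∫ x, f t x * timeDeriv f t x) t := by
  have hf_slice := contDiff_apply_of_uncurry hf
  have hf_slice' := contDiff_apply_of_uncurry (contDiff_uncurry_timeDeriv hf)
  obtain ⟨C, hC⟩ := h.exists_eventually_abs_le ht 0
  obtain ⟨C', hC'⟩ := h'.exists_eventually_abs_le ht (n + 1)
  have hmul := (h.isSchwartz ht (hf_slice t)).mul (h'.isSchwartz ht (hf_slice' t))
  rw [← integral_const_mul]
  refine (hasDerivAt_integral_of_dominated_loc_of_deriv_le
    (F := fun s x => f s x ^ 2) (F' := fun s x => 2 * (f s x * timeDeriv f s x))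
    (bound := fun x => 2 * (C * (C' * (1 + ‖x‖) ^ (-((n + 1 : ℕ) : ℝ))))) (hC.and hC')
    (.of_forall fun s => ((hf_slice s).continuous.pow 2).aestronglyMeasurable)
    (h.isSchwartz ht (hf_slice t)).sq.integrable
    (hmul.integrable.const_mul 2).aestronglyMeasurable
    (.of_forall fun x s hs => ?_)
    (((integrable_one_add_norm (by simp)).const_mul C').const_mul C |>.const_mul 2)
    (.of_forall fun x s _ => ?_)).2
  · have abs_le : |f s x| ≤ C := by simpa using hs.1 x
    rw [Real.norm_eq_abs, abs_mul, abs_mul, abs_two]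
    gcongr
    · exact (abs_nonneg _).trans abs_le
    · exact hs.2 x
  · simpa [mul_assoc] using (hasDerivAt_timeDeriv hf s x).fun_pow 2

theorem hasDerivAt_integral_sq_lap (h : SchwartzFamily T f) (h' : SchwartzFamily T (timeDeriv f))
    (hf : ContDiff ℝ ∞ (Function.uncurry f)) (ht : t ∈ Set.Ioo 0 T) :
    HasDerivAt (fun s => ∫ x, _root_.lap (f s) x ^ 2)
      (2 * ∫ x, _root_.lap (f t) x * _root_.lap (timeDeriv f t) x) t := by
  have timeDeriv_lap_eq := funext (timeDeriv_lap hf)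
  rw [← timeDeriv_lap hf]
  refine hasDerivAt_integral_sq (h.lap (contDiff_apply_of_uncurry hf)) ?_
    (contDiff_uncurry_lap hf) ht
  rw [timeDeriv_lap_eq]
  exact h'.lap (contDiff_apply_of_uncurry (contDiff_uncurry_timeDeriv hf))

end SchwartzFamily

section VectorFields

/-- The family of scalar components of a vector-valued field. -/
def components {E ι : Type*} (v : E → EuclideanSpace ℝ ι) : ι → E → ℝ := fun i x => v x i

theorem contDiff_uncurry_components {E ι : Type*} [NormedAddCommGroup E] [NormedSpace ℝ E]
    [Fintype ι] {v : ℝ → E → EuclideanSpace ℝ ι} (hv : ContDiff ℝ ∞ (Function.uncurry v)) (i : ι) :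
    ContDiff ℝ ∞ (Function.uncurry fun t => components (v t) i) :=
  contDiff_euclidean.1 hv i

theorem sumSq_components {E ι : Type*} [Fintype ι] (v : E → EuclideanSpace ℝ ι) (x : E) :
    sumSq (components v) x = ‖v x‖ ^ 2 := by
  simp [EuclideanSpace.norm_sq_eq, sumSq, components]

variable {n : ℕ} {v : EuclideanSpace ℝ (Fin n) → EuclideanSpace ℝ (Fin n)}
  {w : EuclideanSpace ℝ (Fin n) → EuclideanSpace ℝ (Fin 3)}

theorem lapL2u_sq_add_gradLapL2_sq (hw : ContDiff ℝ ∞ w) :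
    lapL2u v ^ 2 + gradLapL2 w ^ 2 =
      ∑ a, ∫ x, lap (fields (components v) (components w) a) x ^ 2 := by
  have lap_grad (p : Fin 3 × Fin n) : lap (grad (components w) p) =
      pd p.2 (lap (components w p.1)) :=
    (pd_lap (contDiff_euclidean.1 hw p.1) p.2).symm
  rw [lapL2u, gradLapL2, Real.sq_sqrt (by positivity), Real.sq_sqrt (by positivity),
    Fintype.sum_sum_type, Finset.sum_comm, ← Fintype.sum_prod_type']
  simp only [fields, Sum.elim_inl, Sum.elim_inr, lap_grad]
  rfl

theorem L2u_sq_add_gradL2_sq (hv : ∀ j, IsSchwartz (components v j))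
    (hw : ∀ p, IsSchwartz (grad (components w) p)) :
    L2u v ^ 2 + gradL2 w ^ 2 = ∫ x, sumSq (fields (components v) (components w)) x := by
  rw [integral_sumSq (by rintro (j | p); exacts [hv j, hw p]), L2u, gradL2,
    Real.sq_sqrt (by positivity), Real.sq_sqrt (by positivity), Fintype.sum_sum_type,
    Finset.sum_comm, ← Fintype.sum_prod_type']
  rfl

theorem gradLapL2u_sq_add_bilapL2_sq {V : Fin n → EuclideanSpace ℝ (Fin n) → ℝ}
    {F : Fin 3 → EuclideanSpace ℝ (Fin n) → ℝ} {P : EuclideanSpace ℝ (Fin n) → ℝ}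
    (h : IsNLCSlice (components v) V (components w) F P) :
    gradLapL2u v ^ 2 + bilapL2 w ^ 2 =
      ∫ x, sumSq (grad (grad (grad (fields (components v) (components w))))) x := by
  rw [h.integral_sumSq_grad_grad_grad_fields, gradLapL2u, bilapL2, Real.sq_sqrt (by positivity),
    Real.sq_sqrt (by positivity), Finset.sum_comm]
  rfl

theorem vort2L2_sq_add_lapL2_sq {v : EuclideanSpace ℝ (Fin 2) → EuclideanSpace ℝ (Fin 2)}
    {w : EuclideanSpace ℝ (Fin 2) → EuclideanSpace ℝ (Fin 3)}
    {V : Fin 2 → EuclideanSpace ℝ (Fin 2) → ℝ} {F : Fin 3 → EuclideanSpace ℝ (Fin 2) → ℝ}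
    {P : EuclideanSpace ℝ (Fin 2) → ℝ} (h : IsNLCSlice (components v) V (components w) F P) :
    vort2L2 v ^ 2 + lapL2 w ^ 2 =
      ∫ x, sumSq (grad (fields (components v) (components w))) x := by
  have hlap k : IsSchwartz ((lap ∘ components w) k) := h.isSchwartz_lap_director k
  simp_rw [sumSq_grad_fields]
  rw [integral_add (IsSchwartz.sumSq (IsSchwartz.grad h.isSchwartz_u)).integrable
    (IsSchwartz.sumSq (IsSchwartz.grad h.isSchwartz_grad_d)).integrable,
    integral_sumSq_grad_grad h.contDiff_d h.isSchwartz_grad_d, integral_sumSq hlap, vort2L2, lapL2,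
    Real.sq_sqrt (by positivity), Real.sq_sqrt (by positivity),
    ← integral_sumSq_grad_eq_integral_sq_vort2 h.isSchwartz_u h.divfree]
  rfl

end VectorFields

section Solutions

variable {n : ℕ} {T t : ℝ}
  {u : ℝ → EuclideanSpace ℝ (Fin n) → EuclideanSpace ℝ (Fin n)}
  {P : ℝ → EuclideanSpace ℝ (Fin n) → ℝ}
  {d : ℝ → EuclideanSpace ℝ (Fin n) → EuclideanSpace ℝ (Fin 3)}

theorem IsNLC.isNLCSlice (h : IsNLC n T u P d) (hdecay : SchwartzDecay n T u d)
    (ht : t ∈ Set.Ioo 0 T) :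
    IsNLCSlice (components (u t)) (fun j => timeDeriv (fun s => components (u s) j) t)
      (components (d t)) (fun k => timeDeriv (fun s => components (d s) k) t) (P t) where
  isSchwartz_u j :=
    (hdecay.1 j).isSchwartz ht
      (contDiff_apply_of_uncurry (contDiff_uncurry_components h.smooth_u j) t)
  isSchwartz_V j := (hdecay.2.1 j).isSchwartz ht (contDiff_apply_of_uncurry
    (contDiff_uncurry_timeDeriv (contDiff_uncurry_components h.smooth_u j)) t)
  contDiff_d k := contDiff_apply_of_uncurry (contDiff_uncurry_components h.smooth_d k) t
  contDiff_F k := contDiff_apply_of_uncurry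
    (contDiff_uncurry_timeDeriv (contDiff_uncurry_components h.smooth_d k)) t
  isSchwartz_grad_d p := (hdecay.2.2.1 p.2 p.1).isSchwartz ht (contDiff_apply_of_uncurry
    (contDiff_uncurry_pd (contDiff_uncurry_components h.smooth_d p.1) p.2) t)
  isSchwartz_grad_F p := by
    have hd := contDiff_uncurry_components h.smooth_d p.1
    rw [grad, ← timeDeriv_pd hd]
    exact (hdecay.2.2.2 p.2 p.1).isSchwartz ht
      (contDiff_apply_of_uncurry (contDiff_uncurry_timeDeriv (contDiff_uncurry_pd hd p.2)) t)
  contDiff_P := contDiff_apply_of_uncurry h.smooth_P t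
  divfree := h.divfree t ht
  unit x := by rw [sumSq_components, h.unit t ht x, one_pow]
  momentum j x := by
    unfold timeDeriv momentumNonlinearity components
    linarith [h.momentum t ht x j]
  director k x := by
    rw [directorNonlinearity, sumSq_grad, Finset.sum_comm]
    unfold timeDeriv components
    linarith [h.director t ht x k]

theorem hasDerivAt_lapL2u_sq_add_gradLapL2_sq (hu : ContDiff ℝ ∞ (Function.uncurry u))
    (hd : ContDiff ℝ ∞ (Function.uncurry d)) (hdecay : SchwartzDecay n T u d)
    (ht : t ∈ Set.Ioo 0 T) :
    HasDerivAt (fun s => lapL2u (u s) ^ 2 + gradLapL2 (d s) ^ 2)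
      (2 * ∑ a, ∫ x, lap (fields (components (u t)) (components (d t)) a) x *
        lap (fields (fun j => timeDeriv (fun s => components (u s) j) t)
          (fun k => timeDeriv (fun s => components (d s) k) t) a) x) t := by
  have hu' := contDiff_uncurry_components hu
  have hd' := contDiff_uncurry_components hd
  have hd_slice := contDiff_apply_of_uncurry hd
  simp_rw [lapL2u_sq_add_gradLapL2_sq (hd_slice _), Finset.mul_sum]
  refine HasDerivAt.fun_sum fun a _ => ?_
  match a with
  | .inl j => exact (hdecay.1 j).hasDerivAt_integral_sq_lap (hdecay.2.1 j) (hu' j) ht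
  | .inr (k, i) =>
    simp only [fields_inr, ← timeDeriv_pd (hd' k)]
    exact (hdecay.2.2.1 i k).hasDerivAt_integral_sq_lap (hdecay.2.2.2 i k)
      (contDiff_uncurry_pd (hd' k) i) ht

end Solutions

theorem sq_add_sq_pow_three_le {a b : ℝ} :
    (a ^ 2 + b ^ 2) ^ 3 ≤ 4 * (1 + a ^ 12 + b ^ 12) := by
  have pow_add_le : (a ^ 2 + b ^ 2) ^ 3 ≤ 2 ^ 2 * ((a ^ 2) ^ 3 + (b ^ 2) ^ 3) :=
    add_pow_le (sq_nonneg a) (sq_nonneg b) 3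
  linear_combination pow_add_le + 2 * sq_nonneg (a ^ 6 - 1) + 2 * sq_nonneg (b ^ 6 - 1) +
    2 * sq_nonneg (a ^ 6) + 2 * sq_nonneg (b ^ 6)

theorem statement17_general (K : ℝ) :
    ∃ C : ℝ, 0 ≤ C ∧
      ∀ (T : ℝ) (u : ℝ → EuclideanSpace ℝ (Fin 2) → EuclideanSpace ℝ (Fin 2))
        (P : ℝ → EuclideanSpace ℝ (Fin 2) → ℝ)
        (d : ℝ → EuclideanSpace ℝ (Fin 2) → EuclideanSpace ℝ (Fin 3)),
        IsNLC 2 T u P d → SchwartzDecay 2 T u d →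
        ∀ t ∈ Set.Ioo (0 : ℝ) T, L2u (u t) ≤ K → gradL2 (d t) ≤ K → ∃ D : ℝ,
          HasDerivAt (fun s => lapL2u (u s) ^ 2 + gradLapL2 (d s) ^ 2) D t ∧
          D + (1 / 2 : ℝ) * (gradLapL2u (u t) ^ 2 + bilapL2 (d t) ^ 2)
            ≤ C * (vort2L2 (u t) ^ 2 + lapL2 (d t) ^ 2) ^ 3 := by
  obtain ⟨C, hC, energy_le⟩ := exists_energy_inequality (Fin 3) (K ^ 2 + K ^ 2)
  refine ⟨C, hC, fun T u P d h hdecay t ht hu hd => ?_⟩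
  have slice := h.isNLCSlice hdecay ht
  refine ⟨_, hasDerivAt_lapL2u_sq_add_gradLapL2_sq h.smooth_u h.smooth_d hdecay ht, ?_⟩
  rw [gradLapL2u_sq_add_bilapL2_sq slice, vort2L2_sq_add_lapL2_sq slice, one_div]
  refine energy_le _ _ _ _ _ slice ?_
  rw [← L2u_sq_add_gradL2_sq slice.isSchwartz_u slice.isSchwartz_grad_d]
  have hL2u : 0 ≤ L2u (u t) := Real.sqrt_nonneg _
  have hgradL2 : 0 ≤ gradL2 (d t) := Real.sqrt_nonneg _
  gcongr

/-- In 2D, under the energy bounds ‖u‖_{L²} ≤ K and ‖∇d‖_{L²} ≤ K: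
(d/dt)(‖Δu‖² + ‖∇Δd‖²) + ½(‖∇Δu‖² + ‖Δ²d‖²) ≤ C(K)(1 + ‖ω‖¹² + ‖Δd‖¹²). -/
theorem statement17 (K : ℝ) (hK : 0 < K) :
    ∃ C : ℝ,
      ∀ (T : ℝ) (u : ℝ → EuclideanSpace ℝ (Fin 2) → EuclideanSpace ℝ (Fin 2))
        (P : ℝ → EuclideanSpace ℝ (Fin 2) → ℝ)
        (d : ℝ → EuclideanSpace ℝ (Fin 2) → EuclideanSpace ℝ (Fin 3)),
        IsNLC 2 T u P d → SchwartzDecay 2 T u d →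
        (∀ t ∈ Set.Ioo (0:ℝ) T, L2u (u t) ≤ K) →
        (∀ t ∈ Set.Ioo (0:ℝ) T, gradL2 (d t) ≤ K) →
        ∀ t ∈ Set.Ioo (0:ℝ) T, ∃ D : ℝ,
          HasDerivAt (fun s => lapL2u (u s) ^ 2 + gradLapL2 (d s) ^ 2) D t ∧
          D + (1/2 : ℝ) * (gradLapL2u (u t) ^ 2 + bilapL2 (d t) ^ 2)
            ≤ C * (1 + vort2L2 (u t) ^ (12 : ℕ) + lapL2 (d t) ^ (12 : ℕ)) := by
  obtain ⟨C, hC, bound⟩ := statement17_general K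
  refine ⟨C * 4, fun T u P d h hdecay hu hd t ht => ?_⟩
  obtain ⟨D, hD, hle⟩ := bound T u P d h hdecay t ht (hu t ht) (hd t ht)
  refine ⟨D, hD, hle.trans ?_⟩
  rw [mul_assoc]
  exact mul_le_mul_of_nonneg_left sq_add_sq_pow_three_le hC
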